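/- arXiv:quant-ph/0505038 — 4 statements merged into one kernel-verified Lean document; each statement's English description precedes it below -/
import Mathlib

section
/- Strong subadditivity of the von Neumann entropy: for every density matrix ρ whose rows and columns are indexed by the triples Fin dA × Fin dB × Fin dC, one has S(ρ^{AB}) + S(ρ^{BC}) ≥ S(ρ) + S(ρ^{B}), where ρ^{AB} = tr_C ρ, ρ^{BC} = tr_A ρ, and ρ^{B} = tr_{AC} ρ. -/
open scoped ComplexConjugate ComplexOrder

/-- A density matrix: positive semidefinite with trace one. -/
def IsDensityMatrix {n : Type*} [Fintype n] (ρ : Matrix n n ℂ) : Prop :=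
  ρ.PosSemidef ∧ ρ.trace = 1

/-- The von Neumann entropy (in bits) of a (Hermitian) matrix:
`S(ρ) = −∑ᵢ λᵢ log₂ λᵢ` over the eigenvalues, with `0·log₂ 0 = 0`. -/
noncomputable def vnEntropy {n : Type*} [Fintype n] [DecidableEq n]
    (ρ : Matrix n n ℂ) : ℝ :=
  if h : ρ.IsHermitian then -∑ i, h.eigenvalues i * Real.logb 2 (h.eigenvalues i) else 0

/-- The trace norm of a Hermitian matrix: the sum of the absolute values of
its eigenvalues. -/
noncomputable def traceNorm {n : Type*} [Fintype n] [DecidableEq n]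
    (M : Matrix n n ℂ) : ℝ :=
  if h : M.IsHermitian then ∑ i, |h.eigenvalues i| else 0

/-- Partial trace over the third (C) system of a tripartite matrix. -/
noncomputable def ptraceC {dA dB dC : ℕ}
    (ρ : Matrix (Fin dA × Fin dB × Fin dC) (Fin dA × Fin dB × Fin dC) ℂ) :
    Matrix (Fin dA × Fin dB) (Fin dA × Fin dB) ℂ :=
  Matrix.of fun p q => ∑ k, ρ (p.1, p.2, k) (q.1, q.2, k)

/-- Partial trace over the first (A) system of a tripartite matrix. -/
noncomputable def ptraceA {dA dB dC : ℕ}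
    (ρ : Matrix (Fin dA × Fin dB × Fin dC) (Fin dA × Fin dB × Fin dC) ℂ) :
    Matrix (Fin dB × Fin dC) (Fin dB × Fin dC) ℂ :=
  Matrix.of fun p q => ∑ i, ρ (i, p.1, p.2) (i, q.1, q.2)

/-- Partial trace over the first and third (A and C) systems of a tripartite matrix. -/
noncomputable def ptraceAC {dA dB dC : ℕ}
    (ρ : Matrix (Fin dA × Fin dB × Fin dC) (Fin dA × Fin dB × Fin dC) ℂ) :
    Matrix (Fin dB) (Fin dB) ℂ :=
  Matrix.of fun j j' => ∑ i, ∑ k, ρ (i, j, k) (i, j', k)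

/-!
Strong subadditivity is monotonicity of the relative entropy `D(ρ‖σ) = tr ρ (log ρ - log σ)` under
passing to a subsystem, applied to `ρ` and `1 ⊗ ρ^{BC}` and the subsystem `AB`: here
`D(ρ‖1 ⊗ ρ^{BC}) = S(ρ^{BC}) - S(ρ)`, and the marginals on `AB` are `ρ^{AB}` and `1 ⊗ ρ^{B}`.

For monotonicity, let `q` be left multiplication by `σ` and `p` right multiplication by `ρ`. These
commute; write `tr f(q, p)` for the trace of `f(q, p)` applied to the identity matrix. As `s` runs
from `0` to `∞`, `tr p log (q + s p)` runs from `tr ρ log σ` to `tr ρ log ρ + log s · tr ρ`, with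
derivative `tr p² / (q + s p)`. That derivative is the maximum over all matrices `X` of
`2 Re tr Xᴴρ - tr XXᴴσ - s tr XᴴXρ`, attained at the solution `X` of the Sylvester equation
`σ X + s X ρ = ρ`. For `X` in the subalgebra of the subsystem, the quantity maximized depends only
on the marginals, so its maximum can only drop when passing to them; integrating over
`s ∈ (0, ∞)` gives the claim.
-/

open Matrix Filter Topology
open scoped Kronecker MatrixOrder

section TraceForm

variable {n : Type*} [Fintype n]

lemma trace_mul_nonneg_of_posSemidef {A B : Matrix n n ℂ} (hA : A.PosSemidef)
    (hB : B.PosSemidef) : 0 ≤ (A * B).trace := by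
  classical
  obtain ⟨C, rfl⟩ := CStarAlgebra.nonneg_iff_eq_star_mul_self.mp hA.nonneg
  rw [star_eq_conjTranspose, Matrix.mul_assoc, trace_mul_comm]
  exact (hB.mul_mul_conjTranspose_same C).trace_nonneg

lemma trace_mul_conjTranspose_mul_eq_zero_iff {A : Matrix n n ℂ} (hA : A.PosSemidef)
    (X : Matrix n n ℂ) : (X * Xᴴ * A).trace = 0 ↔ A * X = 0 := by
  classical
  obtain ⟨C, rfl⟩ := CStarAlgebra.nonneg_iff_eq_star_mul_self.mp hA.nonneg
  rw [star_eq_conjTranspose, conjTranspose_mul_self_mul_eq_zero,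
    ← trace_conjTranspose_mul_self_eq_zero_iff, Matrix.mul_assoc, trace_mul_comm,
    conjTranspose_mul]
  simp only [Matrix.mul_assoc]

end TraceForm

lemma exists_mul_mul_eq_self {n : Type*} [Fintype n] {A : Matrix n n ℂ}
    (hA : A.IsHermitian) : ∃ G : Matrix n n ℂ, A * (G * A) = A := by
  classical
  have hc (f : ℝ → ℝ) : ContinuousOn f (spectrum ℝ A) := finite_real_spectrum.continuousOn f
  refine ⟨cfc (fun t : ℝ => t⁻¹) A, ?_⟩
  calc A * (cfc (fun t : ℝ => t⁻¹) A * A)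
      = cfc (fun t : ℝ => t) A * (cfc (fun t : ℝ => t⁻¹) A * cfc (fun t : ℝ => t) A) := by
        rw [cfc_id' ℝ A hA.isSelfAdjoint]
    _ = cfc (fun t : ℝ => t * (t⁻¹ * t)) A := by
        rw [← cfc_mul _ _ A (hc _) (hc _), ← cfc_mul _ _ A (hc _) (hc _)]
    _ = A := by simp only [← mul_assoc, mul_inv_mul_cancel, cfc_id' ℝ A hA.isSelfAdjoint]

section Marginal

variable {m n : Type*} [Fintype m] [DecidableEq m] [Fintype n] [DecidableEq n]
  {φ : Matrix m m ℂ →⋆ₐ[ℂ] Matrix n n ℂ} {ρ σ : Matrix n n ℂ} {ρ' σ' : Matrix m m ℂ}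

/-- The support of `ρ` lies in the support of `σ`, encoded as the inclusion `ker σ ⊆ ker ρ`:
the condition under which the relative entropy of `ρ` with respect to `σ` is finite. -/
def SupportLE (ρ σ : Matrix n n ℂ) : Prop :=
  ∀ X : Matrix n n ℂ, σ * X = 0 → ρ * X = 0

/-- `ρ'` is the marginal of `ρ` along `φ`: it represents the restriction `X ↦ tr (φ X * ρ)` of the
functional `tr (· * ρ)` to the observables `X` of a subsystem embedded by `φ`. -/
def IsMarginal (φ : Matrix m m ℂ →⋆ₐ[ℂ] Matrix n n ℂ) (ρ : Matrix n n ℂ)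
    (ρ' : Matrix m m ℂ) : Prop :=
  ∀ X, (φ X * ρ).trace = (X * ρ').trace

lemma map_conjTranspose (φ : Matrix m m ℂ →⋆ₐ[ℂ] Matrix n n ℂ) (X : Matrix m m ℂ) :
    φ Xᴴ = (φ X)ᴴ :=
  map_star φ X

namespace IsMarginal

lemma trace_eq (h : IsMarginal φ ρ ρ') : ρ.trace = ρ'.trace := by
  simpa using h 1

lemma posSemidef (h : IsMarginal φ ρ ρ') (hρ : ρ.PosSemidef) : ρ'.PosSemidef := by
  refine .of_dotProduct_mulVec_nonneg ?_ fun v => ?_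
  · refine ext_iff_trace_mul_left.mpr fun X => ?_
    calc (X * ρ'ᴴ).trace = star (Xᴴ * ρ').trace := by
          rw [← trace_conjTranspose, conjTranspose_mul, conjTranspose_conjTranspose,
            trace_mul_comm]
      _ = star ((φ X)ᴴ * ρ).trace := by
          rw [← h, map_conjTranspose]
      _ = (φ X * ρ).trace := by
          rw [← trace_conjTranspose, conjTranspose_mul, conjTranspose_conjTranspose, hρ.1.eq,
            trace_mul_comm]
      _ = (X * ρ').trace := h X
  · have hφ : (φ (vecMulVec v (star v))).PosSemidef :=
      (map_nonneg φ (posSemidef_vecMulVec_self_star v).nonneg).posSemidef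
    calc 0 ≤ (φ (vecMulVec v (star v)) * ρ).trace := trace_mul_nonneg_of_posSemidef hφ hρ
      _ = star v ⬝ᵥ ρ' *ᵥ v := by
          rw [h, vecMulVec_mul, trace_vecMulVec, dotProduct_comm, dotProduct_mulVec]

lemma mul_map_eq_zero_iff (h : IsMarginal φ ρ ρ') (hρ : ρ.PosSemidef) (X : Matrix m m ℂ) :
    ρ * φ X = 0 ↔ ρ' * X = 0 := by
  rw [← trace_mul_conjTranspose_mul_eq_zero_iff hρ, ← map_conjTranspose, ← map_mul, h,
    trace_mul_conjTranspose_mul_eq_zero_iff (h.posSemidef hρ)]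

lemma supportLE (hρ' : IsMarginal φ ρ ρ') (hσ' : IsMarginal φ σ σ') (hρ : ρ.PosSemidef)
    (hσ : σ.PosSemidef) (h : SupportLE ρ σ) : SupportLE ρ' σ' := fun X hX =>
  (hρ'.mul_map_eq_zero_iff hρ X).1 (h _ ((hσ'.mul_map_eq_zero_iff hσ X).2 hX))

lemma supportLE_map (h : IsMarginal φ ρ ρ') (hρ : ρ.PosSemidef) : SupportLE ρ (φ ρ') := by
  intro X hX
  obtain ⟨G, hG⟩ := exists_mul_mul_eq_self (h.posSemidef hρ).1
  have hφG : ρ * φ (1 - G * ρ') = 0 := by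
    rw [h.mul_map_eq_zero_iff hρ, mul_sub, mul_one, hG, sub_self]
  calc ρ * X = ρ * φ (1 - G * ρ') * X := by
        simp only [map_sub, map_one, map_mul, Matrix.mul_assoc, sub_mul, Matrix.one_mul, hX,
          Matrix.mul_zero, sub_zero]
    _ = 0 := by rw [hφG, Matrix.zero_mul]

end IsMarginal

lemma starAlgHom_map_cfc (φ : Matrix m m ℂ →⋆ₐ[ℂ] Matrix n n ℂ) (hρ' : ρ'.IsHermitian)
    (f : ℝ → ℝ) : φ (cfc f ρ') = cfc f (φ ρ') :=
  StarAlgHom.map_cfc φ f ρ' (finite_real_spectrum.continuousOn f)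
    (LinearMap.continuous_of_finiteDimensional (φ : Matrix m m ℂ →ₗ[ℂ] Matrix n n ℂ)) hρ'
    (IsSelfAdjoint.map hρ' φ)

end Marginal

section DoubleFunctionalCalculus

variable {n : Type*} [Fintype n] [DecidableEq n] {A B : Matrix n n ℂ}

/-- The overlap `|⟨u, v⟩|²` of the `i`-th eigenvector `u` of `A` and the `j`-th eigenvector `v`
of `B`. -/
noncomputable def eigenOverlap (hA : A.IsHermitian) (hB : B.IsHermitian) (i j : n) : ℝ :=
  Complex.normSq (((hA.eigenvectorUnitary : Matrix n n ℂ)ᴴ * hB.eigenvectorUnitary) i j)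

lemma eigenOverlap_nonneg (hA : A.IsHermitian) (hB : B.IsHermitian) (i j : n) :
    0 ≤ eigenOverlap hA hB i j :=
  Complex.normSq_nonneg _

/-- The double functional calculus: `f` applied to the commuting operators of left multiplication
by `A` and right multiplication by `B`, evaluated at the identity matrix. With respect to the
eigenbases of `A` and `B`, these operators multiply the entry `(i, j)` by the `i`-th eigenvalue of
`A` and by the `j`-th eigenvalue of `B`. -/
noncomputable def doubleCFC (hA : A.IsHermitian) (hB : B.IsHermitian) (f : ℝ → ℝ → ℝ) :
    Matrix n n ℂ :=
  hA.eigenvectorUnitary * (Matrix.of fun i j => (f (hA.eigenvalues i) (hB.eigenvalues j) : ℂ) *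
    ((hA.eigenvectorUnitary : Matrix n n ℂ)ᴴ * hB.eigenvectorUnitary) i j) *
    (hB.eigenvectorUnitary : Matrix n n ℂ)ᴴ

lemma cfc_eq_conj_diagonal (hA : A.IsHermitian) (f : ℝ → ℝ) :
    cfc f A = hA.eigenvectorUnitary * diagonal (fun i => (f (hA.eigenvalues i) : ℂ)) *
      (hA.eigenvectorUnitary : Matrix n n ℂ)ᴴ :=
  hA.cfc_eq f

lemma eigenvectorUnitary_conjTranspose_mul_self (hA : A.IsHermitian) :
    (hA.eigenvectorUnitary : Matrix n n ℂ)ᴴ * hA.eigenvectorUnitary = 1 :=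
  Unitary.coe_star_mul_self hA.eigenvectorUnitary

lemma doubleCFC_congr (hA : A.IsHermitian) (hB : B.IsHermitian) {f g : ℝ → ℝ → ℝ}
    (h : ∀ i j, f (hA.eigenvalues i) (hB.eigenvalues j) =
      g (hA.eigenvalues i) (hB.eigenvalues j)) : doubleCFC hA hB f = doubleCFC hA hB g := by
  simp only [doubleCFC, h]

lemma doubleCFC_one (hA : A.IsHermitian) (hB : B.IsHermitian) :
    doubleCFC hA hB (fun _ _ => 1) = 1 := by
  have hU := mul_eq_one_comm.mp (eigenvectorUnitary_conjTranspose_mul_self hA)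
  have hV := mul_eq_one_comm.mp (eigenvectorUnitary_conjTranspose_mul_self hB)
  simp only [doubleCFC, Complex.ofReal_one, one_mul]
  change hA.eigenvectorUnitary * ((hA.eigenvectorUnitary : Matrix n n ℂ)ᴴ *
    hB.eigenvectorUnitary) * (hB.eigenvectorUnitary : Matrix n n ℂ)ᴴ = 1
  rw [← Matrix.mul_assoc, hU, Matrix.one_mul, hV]

lemma doubleCFC_add (hA : A.IsHermitian) (hB : B.IsHermitian) (f g : ℝ → ℝ → ℝ) :
    doubleCFC hA hB (fun a b => f a b + g a b) = doubleCFC hA hB f + doubleCFC hA hB g := by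
  rw [doubleCFC, doubleCFC, doubleCFC, ← Matrix.add_mul, ← Matrix.mul_add]
  congr 2
  ext i j
  simp only [Matrix.add_apply, of_apply, Complex.ofReal_add, add_mul]

lemma smul_doubleCFC (hA : A.IsHermitian) (hB : B.IsHermitian) (c : ℝ) (f : ℝ → ℝ → ℝ) :
    (c : ℂ) • doubleCFC hA hB f = doubleCFC hA hB (fun a b => c * f a b) := by
  rw [doubleCFC, doubleCFC, ← Matrix.smul_mul, ← Matrix.mul_smul]
  congr 2
  ext i j
  simp only [Matrix.smul_apply, of_apply, smul_eq_mul, Complex.ofReal_mul, mul_assoc]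

lemma cfc_mul_doubleCFC (hA : A.IsHermitian) (hB : B.IsHermitian) (f : ℝ → ℝ)
    (g : ℝ → ℝ → ℝ) :
    cfc f A * doubleCFC hA hB g = doubleCFC hA hB (fun a b => f a * g a b) := by
  rw [cfc_eq_conj_diagonal hA, doubleCFC, ← Matrix.mul_assoc, ← Matrix.mul_assoc,
    Matrix.mul_assoc _ _ᴴ, eigenvectorUnitary_conjTranspose_mul_self, Matrix.mul_one,
    Matrix.mul_assoc _ (diagonal _), doubleCFC]
  congr 2
  ext i j
  simp only [diagonal_mul, of_apply, Complex.ofReal_mul, mul_assoc]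

lemma doubleCFC_mul_cfc (hA : A.IsHermitian) (hB : B.IsHermitian) (f : ℝ → ℝ → ℝ)
    (g : ℝ → ℝ) :
    doubleCFC hA hB f * cfc g B = doubleCFC hA hB (fun a b => f a b * g b) := by
  rw [cfc_eq_conj_diagonal hB, doubleCFC, ← Matrix.mul_assoc, ← Matrix.mul_assoc,
    Matrix.mul_assoc _ _ᴴ, eigenvectorUnitary_conjTranspose_mul_self, Matrix.mul_one,
    Matrix.mul_assoc _ _ (diagonal _), doubleCFC]
  congr 2
  ext i j
  simp only [mul_diagonal, of_apply, Complex.ofReal_mul, mul_right_comm]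

lemma cfc_mul_cfc_eq_doubleCFC (hA : A.IsHermitian) (hB : B.IsHermitian) (f g : ℝ → ℝ) :
    cfc f A * cfc g B = doubleCFC hA hB (fun a b => f a * g b) := by
  rw [← Matrix.mul_one (cfc f A), ← doubleCFC_one hA hB, cfc_mul_doubleCFC, doubleCFC_mul_cfc]
  simp only [mul_one]

lemma doubleCFC_snd (hA : A.IsHermitian) (hB : B.IsHermitian) :
    doubleCFC hA hB (fun _ b => b) = B := by
  calc doubleCFC hA hB (fun _ b => b) = doubleCFC hA hB (fun _ b => 1 * b) := by
        simp only [one_mul]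
    _ = B := by
        rw [← doubleCFC_mul_cfc, doubleCFC_one, Matrix.one_mul, cfc_id' ℝ B hB.isSelfAdjoint]

lemma re_trace_doubleCFC (hA : A.IsHermitian) (hB : B.IsHermitian) (f : ℝ → ℝ → ℝ) :
    (doubleCFC hA hB f).trace.re =
      ∑ i, ∑ j, eigenOverlap hA hB i j * f (hA.eigenvalues i) (hB.eigenvalues j) := by
  rw [doubleCFC, Matrix.mul_assoc, trace_mul_comm, Matrix.mul_assoc]
  simp only [trace, diag, Complex.re_sum, Matrix.mul_apply (N := _ * _), eigenOverlap]
  refine Finset.sum_congr rfl fun i _ => Finset.sum_congr rfl fun j _ => ?_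
  rw [show ((hB.eigenvectorUnitary : Matrix n n ℂ)ᴴ * hA.eigenvectorUnitary) j i =
      star (((hA.eigenvectorUnitary : Matrix n n ℂ)ᴴ * hB.eigenvectorUnitary) i j) by
    rw [← conjTranspose_apply, conjTranspose_mul, conjTranspose_conjTranspose], of_apply,
    mul_assoc, Complex.star_def, Complex.mul_conj, ← Complex.ofReal_mul, Complex.ofReal_re,
    mul_comm]

end DoubleFunctionalCalculus

section VariationalForm

variable {n : Type*} [Fintype n]

lemma re_trace_conjTranspose (M : Matrix n n ℂ) : Mᴴ.trace.re = M.trace.re := by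
  rw [trace_conjTranspose, Complex.star_def, Complex.conj_re]

/-- The concave quadratic form in `X` whose maximum is the trace of the resolvent
`p² / (q + s p)` of the left multiplication `q` by `σ` and the right multiplication `p` by `ρ`.
It depends on `ρ` and `σ` only through their traces against `Xᴴ`, `X * Xᴴ` and `Xᴴ * X`, which
are those of the marginals when `X` is an observable of a subsystem. -/
noncomputable def variationalForm (ρ σ : Matrix n n ℂ) (s : ℝ) (X : Matrix n n ℂ) : ℝ :=
  2 * (Xᴴ * ρ).trace.re - (X * Xᴴ * σ).trace.re - s * (Xᴴ * X * ρ).trace.re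

lemma variationalForm_eq_of_sylvester {ρ σ Z : Matrix n n ℂ} (hρ : ρ.IsHermitian)
    (hσ : σ.IsHermitian) {s : ℝ} (hZ : σ * Z + (s : ℂ) • (Z * ρ) = ρ) (X : Matrix n n ℂ) :
    variationalForm ρ σ s X = (Zᴴ * ρ).trace.re -
      (((X - Z) * (X - Z)ᴴ * σ).trace.re + s * ((X - Z)ᴴ * (X - Z) * ρ).trace.re) := by
  have sylvester (Y : Matrix n n ℂ) :
      (Yᴴ * ρ).trace.re = (Z * Yᴴ * σ).trace.re + s * (Yᴴ * Z * ρ).trace.re := by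
    conv_lhs => rw [← hZ]
    rw [mul_add, trace_add, Complex.add_re, Matrix.mul_smul, trace_smul, smul_eq_mul,
      Complex.re_ofReal_mul, ← Matrix.mul_assoc, ← Matrix.mul_assoc, trace_mul_comm (Yᴴ * σ),
      ← Matrix.mul_assoc]
  have symm_left : (X * Zᴴ * σ).trace.re = (Z * Xᴴ * σ).trace.re := by
    rw [← re_trace_conjTranspose, conjTranspose_mul, conjTranspose_mul,
      conjTranspose_conjTranspose, hσ.eq, trace_mul_comm]
  have symm_right : (Zᴴ * X * ρ).trace.re = (Xᴴ * Z * ρ).trace.re := by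
    rw [← re_trace_conjTranspose, conjTranspose_mul, conjTranspose_mul,
      conjTranspose_conjTranspose, hρ.eq, trace_mul_comm]
  simp only [variationalForm, sylvester, conjTranspose_sub, sub_mul, mul_sub, trace_sub,
    Complex.sub_re, symm_left, symm_right]
  ring

lemma isGreatest_variationalForm_of_sylvester {ρ σ Z : Matrix n n ℂ} (hρ : ρ.PosSemidef)
    (hσ : σ.PosSemidef) {s : ℝ} (hs : 0 ≤ s) (hZ : σ * Z + (s : ℂ) • (Z * ρ) = ρ) :
    IsGreatest (Set.range (variationalForm ρ σ s)) (Zᴴ * ρ).trace.re := by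
  have key := variationalForm_eq_of_sylvester hρ.1 hσ.1 hZ
  refine ⟨⟨Z, by simp [key]⟩, ?_⟩
  rintro _ ⟨X, rfl⟩
  have left_nonneg : 0 ≤ ((X - Z) * (X - Z)ᴴ * σ).trace.re := (Complex.nonneg_iff.1 <|
    trace_mul_nonneg_of_posSemidef (posSemidef_self_mul_conjTranspose (X - Z)) hσ).1
  have right_nonneg : 0 ≤ ((X - Z)ᴴ * (X - Z) * ρ).trace.re := (Complex.nonneg_iff.1 <|
    trace_mul_nonneg_of_posSemidef (posSemidef_conjTranspose_mul_self (X - Z)) hρ).1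
  rw [key]
  exact sub_le_self _ (add_nonneg left_nonneg (mul_nonneg hs right_nonneg))

end VariationalForm

lemma IsMarginal.variationalForm_map {m n : Type*} [Fintype m] [DecidableEq m] [Fintype n]
    [DecidableEq n] {φ : Matrix m m ℂ →⋆ₐ[ℂ] Matrix n n ℂ} {ρ σ : Matrix n n ℂ}
    {ρ' σ' : Matrix m m ℂ} (hρ' : IsMarginal φ ρ ρ') (hσ' : IsMarginal φ σ σ') (s : ℝ)
    (X : Matrix m m ℂ) : variationalForm ρ σ s (φ X) = variationalForm ρ' σ' s X := by
  simp only [variationalForm, ← map_conjTranspose, ← map_mul, hρ' _, hσ' _]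

section ResolventTrace

variable {m n : Type*} [Fintype m] [DecidableEq m] [Fintype n] [DecidableEq n]
  {ρ σ : Matrix n n ℂ} {ρ' σ' : Matrix m m ℂ}

/-- The trace of `p² / (q + s p)` applied to left multiplication `q` by `σ` and right
multiplication `p` by `ρ`. -/
noncomputable def resolventTrace (hσ : σ.IsHermitian) (hρ : ρ.IsHermitian) (s : ℝ) : ℝ :=
  (doubleCFC hσ hρ fun q p => p / (q + s * p) * p).trace.re

lemma sylvester_doubleCFC (hσ : σ.PosSemidef) (hρ : ρ.PosSemidef) {s : ℝ} (hs : 0 < s) :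
    σ * doubleCFC hσ.1 hρ.1 (fun q p => p / (q + s * p)) +
      (s : ℂ) • (doubleCFC hσ.1 hρ.1 (fun q p => p / (q + s * p)) * ρ) = ρ := by
  calc _ = cfc (fun q : ℝ => q) σ * doubleCFC hσ.1 hρ.1 (fun q p => p / (q + s * p)) +
      (s : ℂ) • (doubleCFC hσ.1 hρ.1 (fun q p => p / (q + s * p)) * cfc (fun p : ℝ => p) ρ) := by
        rw [cfc_id' ℝ σ hσ.1.isSelfAdjoint, cfc_id' ℝ ρ hρ.1.isSelfAdjoint]
    _ = doubleCFC hσ.1 hρ.1 (fun q p => q * (p / (q + s * p)) + s * (p / (q + s * p) * p)) := by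
        rw [cfc_mul_doubleCFC, doubleCFC_mul_cfc, smul_doubleCFC, doubleCFC_add]
    _ = doubleCFC hσ.1 hρ.1 (fun _ p => p) := by
        refine doubleCFC_congr _ _ fun i j => ?_
        have hq := hσ.eigenvalues_nonneg i
        obtain hp | hp := (hρ.eigenvalues_nonneg j).eq_or_lt
        · simp [← hp]
        · field_simp
    _ = ρ := doubleCFC_snd hσ.1 hρ.1

lemma isGreatest_resolventTrace (hσ : σ.PosSemidef) (hρ : ρ.PosSemidef) {s : ℝ} (hs : 0 < s) :
    IsGreatest (Set.range (variationalForm ρ σ s)) (resolventTrace hσ.1 hρ.1 s) := by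
  convert isGreatest_variationalForm_of_sylvester hρ hσ hs.le (sylvester_doubleCFC hσ hρ hs)
    using 1
  rw [← re_trace_conjTranspose, conjTranspose_mul, conjTranspose_conjTranspose, hρ.1.eq,
    trace_mul_comm, resolventTrace, ← doubleCFC_mul_cfc, cfc_id' ℝ ρ hρ.1.isSelfAdjoint]

lemma IsMarginal.resolventTrace_le {φ : Matrix m m ℂ →⋆ₐ[ℂ] Matrix n n ℂ}
    (hρ' : IsMarginal φ ρ ρ') (hσ' : IsMarginal φ σ σ') (hρ : ρ.PosSemidef) (hσ : σ.PosSemidef)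
    {s : ℝ} (hs : 0 < s) :
    resolventTrace (hσ'.posSemidef hσ).1 (hρ'.posSemidef hρ).1 s ≤
      resolventTrace hσ.1 hρ.1 s := by
  refine (isGreatest_resolventTrace (hσ'.posSemidef hσ) (hρ'.posSemidef hρ) hs).mono
    (isGreatest_resolventTrace hσ hρ hs) ?_
  rintro _ ⟨X, rfl⟩
  exact ⟨φ X, hρ'.variationalForm_map hσ' s X⟩

end ResolventTrace

section LogInterpolation

variable {n : Type*} [Fintype n] [DecidableEq n] {ρ σ : Matrix n n ℂ}

lemma SupportLE.eigenOverlap_mul_eigenvalues (h : SupportLE ρ σ) (hσ : σ.IsHermitian)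
    (hρ : ρ.PosSemidef) {i : n} (hi : hσ.eigenvalues i = 0) (j : n) :
    eigenOverlap hσ hρ.1 i j * hρ.1.eigenvalues j = 0 := by
  let kernelInd : ℝ → ℝ := fun t => if t = 0 then 1 else 0
  have hc (g : ℝ → ℝ) : ContinuousOn g (spectrum ℝ σ) := finite_real_spectrum.continuousOn g
  have mul_kernelProjection : σ * cfc kernelInd σ = 0 := by
    calc σ * cfc kernelInd σ = cfc (fun t : ℝ => t) σ * cfc kernelInd σ := by
          rw [cfc_id' ℝ σ hσ.isSelfAdjoint]
      _ = 0 := by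
        have mul_kernelInd : (fun t => t * kernelInd t) = 0 := by
          ext t
          simp [kernelInd]
        rw [← cfc_mul _ _ σ (hc _) (hc _), mul_kernelInd, cfc_zero]
  have sum_eq_zero : ∑ i, ∑ j, eigenOverlap hσ hρ.1 i j *
      (kernelInd (hσ.eigenvalues i) * hρ.1.eigenvalues j) = 0 := by
    rw [← re_trace_doubleCFC hσ hρ.1 (fun q p => kernelInd q * p), ← cfc_mul_cfc_eq_doubleCFC,
      cfc_id' ℝ ρ hρ.1.isSelfAdjoint, trace_mul_comm, h _ mul_kernelProjection, trace_zero,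
      Complex.zero_re]
  have term_nonneg (i j : n) : 0 ≤ eigenOverlap hσ hρ.1 i j *
      (kernelInd (hσ.eigenvalues i) * hρ.1.eigenvalues j) := by
    have hf : 0 ≤ kernelInd (hσ.eigenvalues i) := by simp only [kernelInd]; split <;> norm_num
    exact mul_nonneg (eigenOverlap_nonneg _ _ i j) (mul_nonneg hf (hρ.eigenvalues_nonneg j))
  rw [Finset.sum_eq_zero_iff_of_nonneg fun i _ => Finset.sum_nonneg fun j _ => term_nonneg i j]
    at sum_eq_zero
  have := (Finset.sum_eq_zero_iff_of_nonneg fun j _ => term_nonneg i j).1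
    (sum_eq_zero i (Finset.mem_univ i)) j (Finset.mem_univ j)
  simpa only [kernelInd, hi, if_true, one_mul] using this

/-- The trace of `p log (q + s p)` applied to left multiplication `q` by `σ` and right
multiplication `p` by `ρ`: it runs from `tr ρ log σ` at `s = 0` to `tr ρ log ρ + log s · tr ρ`
asymptotically as `s → ∞`. -/
noncomputable def logInterpolation (hσ : σ.IsHermitian) (hρ : ρ.IsHermitian) (s : ℝ) : ℝ :=
  (doubleCFC hσ hρ fun q p => p * Real.log (q + s * p)).trace.re

lemma logInterpolation_zero (hσ : σ.IsHermitian) (hρ : ρ.IsHermitian) :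
    logInterpolation hσ hρ 0 = (ρ * cfc Real.log σ).trace.re := by
  simp only [logInterpolation, zero_mul, add_zero, mul_comm _ (Real.log _)]
  rw [← cfc_mul_cfc_eq_doubleCFC, cfc_id' ℝ ρ hρ.isSelfAdjoint, trace_mul_comm]

lemma hasDerivAt_const_mul_mul_log_add_mul {w p q s : ℝ} (hp : 0 ≤ p) (hq : 0 ≤ q) (hs : 0 ≤ s)
    (hwp : q = 0 → w * p = 0) :
    HasDerivAt (fun s => w * (p * Real.log (q + s * p))) (w * (p / (q + s * p) * p)) s := by
  obtain hw | hw := eq_or_ne (w * p) 0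
  · rcases mul_eq_zero.1 hw with rfl | rfl <;> simpa using hasDerivAt_const s (0 : ℝ)
  · have hp : 0 < p := hp.lt_of_ne' (right_ne_zero_of_mul hw)
    have hq : 0 < q := hq.lt_of_ne' fun h => hw (hwp h)
    have hd : HasDerivAt (fun s => q + s * p) p s := by
      simpa using ((hasDerivAt_id s).mul_const p).const_add q
    simpa only [mul_comm p (_ / _)] using ((hd.log (by positivity)).const_mul p).const_mul w

lemma hasDerivAt_logInterpolation (h : SupportLE ρ σ) (hσ : σ.PosSemidef) (hρ : ρ.PosSemidef)
    {s : ℝ} (hs : 0 ≤ s) :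
    HasDerivAt (logInterpolation hσ.1 hρ.1) (resolventTrace hσ.1 hρ.1 s) s := by
  unfold logInterpolation
  simp only [resolventTrace, re_trace_doubleCFC]
  exact .fun_sum fun i _ => .fun_sum fun j _ => hasDerivAt_const_mul_mul_log_add_mul
    (hρ.eigenvalues_nonneg j) (hσ.eigenvalues_nonneg i) hs fun hi =>
      h.eigenOverlap_mul_eigenvalues hσ.1 hρ hi j

lemma tendsto_mul_log_add_mul_sub {p : ℝ} (hp : 0 ≤ p) (q : ℝ) :
    Tendsto (fun s => p * Real.log (q + s * p) - Real.log s * p) atTop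
      (𝓝 (p * Real.log p)) := by
  obtain rfl | hp := hp.eq_or_lt
  · simp
  have hlim : Tendsto (fun s : ℝ => q / s + p) atTop (𝓝 p) := by
    simpa using (tendsto_const_nhds.div_atTop tendsto_id).add_const p
  refine ((hlim.log hp.ne').const_mul p).congr' ?_
  filter_upwards [eventually_gt_atTop 0, hlim.eventually_ne hp.ne'] with s hs hqp
  rw [show q + s * p = s * (q / s + p) by field_simp, Real.log_mul hs.ne' hqp]
  ring

lemma tendsto_logInterpolation (hσ : σ.IsHermitian) (hρ : ρ.PosSemidef) :
    Tendsto (fun s => logInterpolation hσ hρ.1 s - Real.log s * ρ.trace.re) atTop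
      (𝓝 (ρ * cfc Real.log ρ).trace.re) := by
  have trace_eq : ρ.trace.re = (doubleCFC hσ hρ.1 fun _ p => p).trace.re := by
    rw [doubleCFC_snd]
  have limit_eq : ρ * cfc Real.log ρ = doubleCFC hσ hρ.1 fun _ p => p * Real.log p := by
    rw [← doubleCFC_mul_cfc, doubleCFC_snd]
  rw [limit_eq, trace_eq]
  simp only [logInterpolation, re_trace_doubleCFC, Finset.mul_sum,
    ← Finset.sum_sub_distrib, mul_left_comm (Real.log _), ← mul_sub]
  exact tendsto_finsetSum _ fun i _ => tendsto_finsetSum _ fun j _ =>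
    (tendsto_mul_log_add_mul_sub (hρ.eigenvalues_nonneg j) _).const_mul _

end LogInterpolation

section Entropy

variable {n : Type*} [Fintype n] [DecidableEq n]

lemma re_trace_cfc {A : Matrix n n ℂ} (hA : A.IsHermitian) (f : ℝ → ℝ) :
    (cfc f A).trace.re = ∑ i, f (hA.eigenvalues i) := by
  rw [cfc_eq_conj_diagonal hA, trace_mul_cycle, eigenvectorUnitary_conjTranspose_mul_self,
    Matrix.one_mul, trace_diagonal, Complex.re_sum]
  simp only [Complex.ofReal_re]

lemma vnEntropy_eq_neg_trace_mul_log {ρ : Matrix n n ℂ} (hρ : ρ.IsHermitian) :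
    vnEntropy ρ = -(ρ * cfc Real.log ρ).trace.re / Real.log 2 := by
  have mul_log_eq : ρ * cfc Real.log ρ = cfc (fun t => t * Real.log t) ρ := by
    rw [cfc_mul _ _ ρ (finite_real_spectrum.continuousOn _) (finite_real_spectrum.continuousOn _),
      cfc_id' ℝ ρ hρ.isSelfAdjoint]
  rw [mul_log_eq, re_trace_cfc hρ, vnEntropy, dif_pos hρ, neg_div, Finset.sum_div]
  simp only [Real.logb, mul_div_assoc]

end Entropy

section RelativeEntropy

variable {m n : Type*} [Fintype m] [DecidableEq m] [Fintype n] [DecidableEq n]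
  {φ : Matrix m m ℂ →⋆ₐ[ℂ] Matrix n n ℂ} {ρ σ : Matrix n n ℂ} {ρ' σ' : Matrix m m ℂ}

/-- The quantum relative entropy `D(ρ‖σ) = tr ρ (log ρ - log σ)`, in nats. Since `Real.log 0 = 0`,
it is finite even without `SupportLE ρ σ`, where the usual quantity is `∞`. -/
noncomputable def relativeEntropy (ρ σ : Matrix n n ℂ) : ℝ :=
  (ρ * cfc Real.log ρ).trace.re - (ρ * cfc Real.log σ).trace.re

namespace IsMarginal

lemma monotoneOn_logInterpolation_sub (hρ' : IsMarginal φ ρ ρ') (hσ' : IsMarginal φ σ σ')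
    (hρ : ρ.PosSemidef) (hσ : σ.PosSemidef) (h : SupportLE ρ σ) :
    MonotoneOn (fun s => logInterpolation hσ.1 hρ.1 s -
      logInterpolation (hσ'.posSemidef hσ).1 (hρ'.posSemidef hρ).1 s) (Set.Ici 0) := by
  have hderiv {s : ℝ} (hs : 0 ≤ s) := (hasDerivAt_logInterpolation h hσ hρ hs).fun_sub
    (hasDerivAt_logInterpolation (hρ'.supportLE hσ' hρ hσ h) (hσ'.posSemidef hσ)
      (hρ'.posSemidef hρ) hs)
  refine monotoneOn_of_deriv_nonneg (convex_Ici 0)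
    (fun s hs => (hderiv hs).continuousAt.continuousWithinAt)
    (fun s hs => ?_) fun s hs => ?_
  all_goals rw [interior_Ici] at hs
  · exact (hderiv (le_of_lt hs)).differentiableAt.differentiableWithinAt
  · rw [(hderiv (le_of_lt hs)).deriv]
    exact sub_nonneg.2 (hρ'.resolventTrace_le hσ' hρ hσ hs)

theorem relativeEntropy_le (hρ' : IsMarginal φ ρ ρ') (hσ' : IsMarginal φ σ σ')
    (hρ : ρ.PosSemidef) (hσ : σ.PosSemidef) (h : SupportLE ρ σ) :
    relativeEntropy ρ' σ' ≤ relativeEntropy ρ σ := by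
  have hlim := (tendsto_logInterpolation hσ.1 hρ).sub
    (tendsto_logInterpolation (hσ'.posSemidef hσ).1 (hρ'.posSemidef hρ))
  simp only [hρ'.trace_eq, sub_sub_sub_cancel_right] at hlim
  have hle := ge_of_tendsto hlim <| (eventually_ge_atTop 0).mono fun s hs =>
    hρ'.monotoneOn_logInterpolation_sub hσ' hρ hσ h Set.self_mem_Ici hs hs
  simp only [logInterpolation_zero] at hle
  rw [relativeEntropy, relativeEntropy]
  linarith

lemma relativeEntropy_map (h : IsMarginal φ ρ ρ') (hρ : ρ.PosSemidef) :
    relativeEntropy ρ (φ ρ') =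
      (ρ * cfc Real.log ρ).trace.re - (ρ' * cfc Real.log ρ').trace.re := by
  rw [relativeEntropy, ← starAlgHom_map_cfc φ (h.posSemidef hρ).1, trace_mul_comm ρ (φ _), h,
    trace_mul_comm _ ρ']

lemma relativeEntropy_map_div_log_two (h : IsMarginal φ ρ ρ') (hρ : ρ.PosSemidef) :
    relativeEntropy ρ (φ ρ') / Real.log 2 = vnEntropy ρ' - vnEntropy ρ := by
  rw [h.relativeEntropy_map hρ, vnEntropy_eq_neg_trace_mul_log hρ.1,
    vnEntropy_eq_neg_trace_mul_log (h.posSemidef hρ).1]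
  ring

end IsMarginal

end RelativeEntropy

section PartialTrace

variable {n m k : Type*} [Fintype n] [DecidableEq n] [Fintype m] [DecidableEq m] [Fintype k]
  [DecidableEq k]

/-- The embedding `X ↦ X ⊗ 1` of the observables of a tensor factor `m`, for a system `n`
decomposed by `e` into that factor and its complement `k`. -/
noncomputable def ampliation (e : n ≃ m × k) : Matrix m m ℂ →⋆ₐ[ℂ] Matrix n n ℂ where
  toFun X := (X ⊗ₖ (1 : Matrix k k ℂ)).submatrix e e
  map_one' := by simp
  map_mul' X Y := by
    rw [submatrix_mul_equiv, ← mul_kronecker_mul, Matrix.one_mul]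
  map_zero' := by simp
  map_add' X Y := by rw [add_kronecker, submatrix_add]; rfl
  commutes' c := by
    rw [Algebra.algebraMap_eq_smul_one, Algebra.algebraMap_eq_smul_one, smul_kronecker,
      one_kronecker_one, ← submatrix_one_equiv e]
    rfl
  map_star' X := by
    simp only [star_eq_conjTranspose, conjTranspose_submatrix, conjTranspose_kronecker,
      conjTranspose_one]

lemma ampliation_apply (e : n ≃ m × k) (X : Matrix m m ℂ) :
    ampliation e X = (X ⊗ₖ (1 : Matrix k k ℂ)).submatrix e e :=
  rfl

/-- The partial trace over the complement `k` of the tensor factor `m` in a system `n` decomposed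
by `e`. -/
def partialTrace (e : n ≃ m × k) (ρ : Matrix n n ℂ) : Matrix m m ℂ :=
  Matrix.of fun i j => ∑ l, ρ (e.symm (i, l)) (e.symm (j, l))

lemma isMarginal_partialTrace (e : n ≃ m × k) (ρ : Matrix n n ℂ) :
    IsMarginal (ampliation e) ρ (partialTrace e ρ) := by
  intro X
  simp only [trace, diag, Matrix.mul_apply, ← e.symm.sum_comp, Fintype.sum_prod_type,
    ampliation_apply, kroneckerMap_apply, submatrix_apply, e.apply_symm_apply, one_apply,
    mul_ite, mul_one, mul_zero, ite_mul, zero_mul, Finset.sum_ite_eq, Finset.mem_univ, if_true,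
    partialTrace, of_apply, Finset.mul_sum]
  exact Finset.sum_congr rfl fun _ _ => Finset.sum_comm

lemma partialTrace_comm {α β γ : Type*} [Fintype α] [Fintype γ]
    (ρ : Matrix (α × β × γ) (α × β × γ) ℂ) :
    partialTrace (Equiv.refl (β × γ)) (partialTrace (Equiv.prodComm α (β × γ)) ρ) =
      partialTrace (Equiv.prodComm α β) (partialTrace (Equiv.prodAssoc α β γ).symm ρ) := by
  ext x y
  simp only [partialTrace, of_apply]
  exact Finset.sum_comm

end PartialTrace

section StrongSubadditivity

variable {α β γ : Type*} [Fintype α] [DecidableEq α] [Fintype β] [DecidableEq β] [Fintype γ]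
  [DecidableEq γ]

lemma partialTrace_ampliation_prodComm (τ : Matrix (β × γ) (β × γ) ℂ) :
    partialTrace (Equiv.prodAssoc α β γ).symm (ampliation (Equiv.prodComm α (β × γ)) τ) =
      ampliation (Equiv.prodComm α β) (partialTrace (Equiv.refl (β × γ)) τ) := by
  ext x y
  simp only [partialTrace, ampliation_apply, of_apply, submatrix_apply, kroneckerMap_apply,
    Finset.sum_mul]
  rfl

theorem vnEntropy_strong_subadditive_general {ρ : Matrix (α × β × γ) (α × β × γ) ℂ}
    (hρ : ρ.PosSemidef) :
    let ρAB := partialTrace (Equiv.prodAssoc α β γ).symm ρ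
    let ρBC := partialTrace (Equiv.prodComm α (β × γ)) ρ
    let ρB := partialTrace (Equiv.prodComm α β) ρAB
    vnEntropy ρ + vnEntropy ρB ≤ vnEntropy ρAB + vnEntropy ρBC := by
  intro ρAB ρBC ρB
  have hAB : IsMarginal (ampliation (Equiv.prodAssoc α β γ).symm) ρ ρAB :=
    isMarginal_partialTrace _ ρ
  have hBC : IsMarginal (ampliation (Equiv.prodComm α (β × γ))) ρ ρBC :=
    isMarginal_partialTrace _ ρ
  have hB : IsMarginal (ampliation (Equiv.prodComm α β)) ρAB ρB := isMarginal_partialTrace _ ρAB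
  have hσ : IsMarginal (ampliation (Equiv.prodAssoc α β γ).symm)
      (ampliation (Equiv.prodComm α (β × γ)) ρBC) (ampliation (Equiv.prodComm α β) ρB) := by
    convert isMarginal_partialTrace _ _
    rw [partialTrace_ampliation_prodComm, partialTrace_comm]
  have hmono := hAB.relativeEntropy_le hσ hρ
    (map_nonneg _ (hBC.posSemidef hρ).nonneg).posSemidef (hBC.supportLE_map hρ)
  have hdiv := div_le_div_of_nonneg_right hmono (Real.log_nonneg one_le_two)
  rw [hB.relativeEntropy_map_div_log_two (hAB.posSemidef hρ),
    hBC.relativeEntropy_map_div_log_two hρ] at hdiv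
  linarith

end StrongSubadditivity

/-- strong subadditivity of the von Neumann entropy. -/
theorem vnEntropy_strong_subadditive {dA dB dC : ℕ}
    (ρ : Matrix (Fin dA × Fin dB × Fin dC) (Fin dA × Fin dB × Fin dC) ℂ)
    (hρ : IsDensityMatrix ρ) :
    vnEntropy ρ + vnEntropy (ptraceAC ρ) ≤
      vnEntropy (ptraceC ρ) + vnEntropy (ptraceA ρ) :=
  vnEntropy_strong_subadditive_general hρ.1
end

section
/- For the 3×3 antisymmetric Werner state, every pure-state decomposition has average entanglement exactly 1: let ρ be the matrix with rows and columns indexed by Fin 3 × Fin 3 and entries ρ_{(i,j),(k,l)} = (1/6)(δ_{ik}δ_{jl} − δ_{il}δ_{jk}). Then for every finite decomposition ρ = ∑_{i=1}^m p_i v_i v_i† with p_i > 0, ∑_i p_i = 1 and unit vectors v_i, each v_i has entropy of entanglement E(v_i) = 1, and hence ∑_i p_i E(v_i) = 1. Consequently both the entanglement of formation and the entanglement of assistance of ρ equal 1. -/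
open scoped ComplexConjugate ComplexOrder

/-- The entropy of entanglement of a bipartite pure-state vector:
the entropy of its reduced state on the first factor. -/
noncomputable def entE {A B : Type*} [Fintype A] [DecidableEq A] [Fintype B]
    (v : A × B → ℂ) : ℝ :=
  vnEntropy (Matrix.of fun x x' => ∑ y, v (x, y) * conj (v (x', y)))

/-- The entanglement of formation: infimum of the average pure-state entanglement
over all finite pure-state decompositions. -/
noncomputable def EoF {A B : Type*} [Fintype A] [DecidableEq A] [Fintype B]
    (ρ : Matrix (A × B) (A × B) ℂ) : ℝ :=
  sInf {e : ℝ | ∃ (m : ℕ) (p : Fin m → ℝ) (v : Fin m → A × B → ℂ),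
    (∀ i, 0 < p i) ∧ (∑ i, p i = 1) ∧ (∀ i, ∑ x, ‖v i x‖ ^ 2 = 1) ∧
    ρ = ∑ i, (p i : ℂ) • Matrix.of (fun x y => v i x * conj (v i y)) ∧
    e = ∑ i, p i * entE (v i)}

/-- The entanglement of assistance: supremum of the average pure-state entanglement
over all finite pure-state decompositions. -/
noncomputable def EoA {A B : Type*} [Fintype A] [DecidableEq A] [Fintype B]
    (ρ : Matrix (A × B) (A × B) ℂ) : ℝ :=
  sSup {e : ℝ | ∃ (m : ℕ) (p : Fin m → ℝ) (v : Fin m → A × B → ℂ),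
    (∀ i, 0 < p i) ∧ (∑ i, p i = 1) ∧ (∀ i, ∑ x, ‖v i x‖ ^ 2 = 1) ∧
    ρ = ∑ i, (p i : ℂ) • Matrix.of (fun x y => v i x * conj (v i y)) ∧
    e = ∑ i, p i * entE (v i)}

/-- The 3×3 antisymmetric Werner state,
`ρ_{(i,j),(k,l)} = (1/6)(δ_{ik}δ_{jl} − δ_{il}δ_{jk})`. -/
noncomputable def wernerAS : Matrix (Fin 3 × Fin 3) (Fin 3 × Fin 3) ℂ :=
  Matrix.of fun x y =>
    (1/6 : ℂ) * ((if x.1 = y.1 ∧ x.2 = y.2 then 1 else 0)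
               - (if x.1 = y.2 ∧ x.2 = y.1 then 1 else 0))

/-!
A pure state in an ensemble for `ρ` is orthogonal to the kernel of `ρ`. If `ρ` is supported on the
antisymmetric subspace, then the coefficient matrix `M` of each such state is skew-symmetric. A skew
`3 × 3` matrix acts as a cross product, and the triple product expansion gives
`2 M N M = tr (M N) M` for skew `M`, `N`. With `N = Mᴴ` and `tr (M Mᴴ) = 1`, the reduced state
`R = M Mᴴ` satisfies `R² = R / 2`, so it has the spectrum `{1/2, 1/2, 0}` and entropy one bit.
-/

theorem sum_subtype_ne_zero_eq_sum {ι R M : Type*} [Fintype ι] [Zero R] [AddCommMonoid M]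
    {f : ι → R} [Fintype {i // f i ≠ 0}] {g : ι → M} (h : ∀ i, f i = 0 → g i = 0) :
    ∑ i : {i // f i ≠ 0}, g i = ∑ i, g i :=
  Fintype.sum_of_injective _ Subtype.val_injective _ _ (by simpa using h) fun _ => rfl

section LinearAlgebra

open Matrix

-- For `M x = a × x` and `N x = b × x`, half of this is `a × (b × (a × x)) = -(a ⬝ b) (a × x)`.
theorem two_smul_mul_mul_of_transpose_eq_neg {R : Type*} [CommRing R] [IsAddTorsionFree R]
    {M N : Matrix (Fin 3) (Fin 3) R} (hM : Mᵀ = -M) (hN : Nᵀ = -N) :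
    2 • (M * N * M) = (M * N).trace • M := by
  have skew {A : Matrix (Fin 3) (Fin 3) R} (hA : Aᵀ = -A) (i j : Fin 3) : A j i = -A i j :=
    congrFun₂ hA i j
  have diag {A : Matrix (Fin 3) (Fin 3) R} (hA : Aᵀ = -A) (i : Fin 3) : A i i = 0 :=
    self_eq_neg.1 (skew hA i i)
  ext i j
  fin_cases i <;> fin_cases j <;>
    simp [mul_apply, trace, Fin.sum_univ_three, diag hM, diag hN,
      skew hM 0 1, skew hM 0 2, skew hM 1 2, skew hN 0 1, skew hN 0 2, skew hN 1 2] <;> ring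

variable {𝕜 n : Type*} [RCLike 𝕜] [Fintype n] [DecidableEq n]

theorem eigenvalues_eq_zero_or_eq_of_mul_self_eq_smul {A : Matrix n n 𝕜} (hA : A.IsHermitian)
    {c : ℝ} (h : A * A = c • A) (i : n) : hA.eigenvalues i = 0 ∨ hA.eigenvalues i = c := by
  set u := (hA.eigenvectorBasis i).ofLp
  set l := hA.eigenvalues i
  have hu : u ≠ 0 := fun h0 =>
    hA.eigenvectorBasis.orthonormal.ne_zero i (WithLp.ofLp_injective 2 h0)
  have hAu : A *ᵥ u = l • u := hA.mulVec_eigenvectorBasis i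
  have hl : (l * (l - c)) • u = 0 := by
    have hsq := congrArg (· *ᵥ u) h
    simp only [← mulVec_mulVec, smul_mulVec, hAu, mulVec_smul, smul_smul] at hsq
    rw [mul_sub, sub_smul, hsq, mul_comm, sub_self]
  simpa [hu, sub_eq_zero] using hl

theorem vnEntropy_eq_of_mul_self_eq_smul {ρ : Matrix n n ℂ} (hρ : ρ.IsHermitian) {c : ℝ}
    (h : ρ * ρ = c • ρ) : vnEntropy ρ = -(ρ.trace.re * Real.logb 2 c) := by
  have hterm (i : n) : hρ.eigenvalues i * Real.logb 2 (hρ.eigenvalues i) =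
      hρ.eigenvalues i * Real.logb 2 c := by
    rcases eigenvalues_eq_zero_or_eq_of_mul_self_eq_smul hρ h i with h0 | hc
    · simp only [h0, zero_mul]
    · rw [hc]
  have htrace : ρ.trace.re = ∑ i, hρ.eigenvalues i := by
    simp [hρ.trace_eq_sum_eigenvalues]
  rw [vnEntropy, dif_pos hρ, htrace, Finset.sum_mul, Finset.sum_congr rfl fun i _ => hterm i]

theorem sum_eigenvalues_smul_vecMulVec_eigenvectorBasis {A : Matrix n n 𝕜} (hA : A.IsHermitian) :
    ∑ i, (hA.eigenvalues i : 𝕜) •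
      vecMulVec (hA.eigenvectorBasis i).ofLp (star (hA.eigenvectorBasis i).ofLp) = A := by
  conv_rhs => rw [hA.spectral_theorem, Unitary.conjStarAlgAut_apply]
  ext x y
  simp [RCLike.real_smul_eq_coe_mul, Matrix.sum_apply, vecMulVec_apply, mul_apply, diagonal_apply,
    mul_assoc, mul_left_comm]

end LinearAlgebra

section PureEnsemble

open Matrix

variable {n ι κ : Type*} [Fintype n] [Fintype ι] [Fintype κ]

/-- A finite ensemble of pure states with positive weights `p` and unit vectors `v`, realizing the
mixed state `ρ = ∑ i, p i • |v i⟩⟨v i|`. It packages the conditions on a decomposition in the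
definitions of `EoF` and `EoA`, for an arbitrary finite index type. -/
structure IsPureEnsemble (ρ : Matrix n n ℂ) (p : ι → ℝ) (v : ι → n → ℂ) : Prop where
  weight_pos : ∀ i, 0 < p i
  sum_weight : ∑ i, p i = 1
  sum_norm_sq : ∀ i, ∑ x, ‖v i x‖ ^ 2 = 1
  eq_sum : ρ = ∑ i, (p i : ℂ) • vecMulVec (v i) (star (v i))

namespace IsPureEnsemble

variable {ρ : Matrix n n ℂ} {p : ι → ℝ} {v : ι → n → ℂ}

theorem comp_equiv (h : IsPureEnsemble ρ p v) (e : κ ≃ ι) :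
    IsPureEnsemble ρ (p ∘ e) (v ∘ e) where
  weight_pos i := h.weight_pos (e i)
  sum_weight := (e.sum_comp p).trans h.sum_weight
  sum_norm_sq i := h.sum_norm_sq (e i)
  eq_sum := h.eq_sum.trans (e.sum_comp fun i => (p i : ℂ) • vecMulVec (v i) (star (v i))).symm

theorem star_dotProduct_eq_zero (h : IsPureEnsemble ρ p v) {w : n → ℂ} (hw : ρ *ᵥ w = 0) (i : ι) :
    star (v i) ⬝ᵥ w = 0 := by
  have hsum : ∑ j, p j * ‖star (v j) ⬝ᵥ w‖ ^ 2 = 0 := by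
    have hquad : star w ⬝ᵥ ρ *ᵥ w = 0 := by rw [hw, dotProduct_zero]
    rw [h.eq_sum, sum_mulVec, dotProduct_sum] at hquad
    rw [← Complex.ofReal_eq_zero, ← hquad, Complex.ofReal_sum]
    refine Finset.sum_congr rfl fun j _ => ?_
    have hconj : star w ⬝ᵥ v j = conj (star (v j) ⬝ᵥ w) := by
      rw [starRingEnd_apply, star_dotProduct]
    simp [smul_mulVec, vecMulVec_mulVec, hconj, Complex.mul_conj']
  have hterm := (Finset.sum_eq_zero_iff_of_nonneg fun j _ =>
    mul_nonneg (h.weight_pos j).le (sq_nonneg _)).1 hsum i (Finset.mem_univ i)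
  simpa [(h.weight_pos i).ne'] using hterm

end IsPureEnsemble

theorem IsDensityMatrix.exists_isPureEnsemble {ρ : Matrix n n ℂ} (hρ : IsDensityMatrix ρ) :
    ∃ (m : ℕ) (p : Fin m → ℝ) (v : Fin m → n → ℂ), IsPureEnsemble ρ p v := by
  classical
  have hH : ρ.IsHermitian := hρ.1.isHermitian
  let support := {i // hH.eigenvalues i ≠ 0}
  have hspectral : IsPureEnsemble ρ (fun i : support => hH.eigenvalues i)
      (fun i => (hH.eigenvectorBasis i).ofLp) :=
    { weight_pos i := (hρ.1.eigenvalues_nonneg i).lt_of_ne' i.2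
      sum_weight := by
        rw [sum_subtype_ne_zero_eq_sum fun _ => id, ← Complex.ofReal_inj, Complex.ofReal_sum,
          Complex.ofReal_one, ← hρ.2]
        exact hH.trace_eq_sum_eigenvalues.symm
      sum_norm_sq i := by
        rw [← EuclideanSpace.norm_sq_eq, hH.eigenvectorBasis.orthonormal.1, one_pow]
      eq_sum := by
        rw [sum_subtype_ne_zero_eq_sum (g := fun i => (hH.eigenvalues i : ℂ) •
          vecMulVec (hH.eigenvectorBasis i).ofLp (star (hH.eigenvectorBasis i).ofLp))
          fun i h => by rw [h, Complex.ofReal_zero, zero_smul]]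
        exact (sum_eigenvalues_smul_vecMulVec_eigenvectorBasis hH).symm }
  exact ⟨_, _, _, hspectral.comp_equiv (Fintype.equivFin support).symm⟩

variable {A B : Type*} [Fintype A] [DecidableEq A] [Fintype B]

theorem EoF_eq_and_EoA_eq_of_forall_isPureEnsemble {ρ : Matrix (A × B) (A × B) ℂ}
    (hρ : IsDensityMatrix ρ) {e : ℝ}
    (h : ∀ {m : ℕ} {p : Fin m → ℝ} {v : Fin m → A × B → ℂ},
      IsPureEnsemble ρ p v → ∑ i, p i * entE (v i) = e) :
    EoF ρ = e ∧ EoA ρ = e := by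
  have hset : {e : ℝ | ∃ (m : ℕ) (p : Fin m → ℝ) (v : Fin m → A × B → ℂ),
      (∀ i, 0 < p i) ∧ (∑ i, p i = 1) ∧ (∀ i, ∑ x, ‖v i x‖ ^ 2 = 1) ∧
      ρ = ∑ i, (p i : ℂ) • Matrix.of (fun x y => v i x * conj (v i y)) ∧
      e = ∑ i, p i * entE (v i)} = {e} := by
    refine Set.eq_singleton_iff_unique_mem.2 ⟨?_, ?_⟩
    · obtain ⟨m, p, v, hv⟩ := hρ.exists_isPureEnsemble
      exact ⟨m, p, v, hv.weight_pos, hv.sum_weight, hv.sum_norm_sq, hv.eq_sum, (h hv).symm⟩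
    · rintro _ ⟨m, p, v, hpos, hsum, hnorm, hρv, rfl⟩
      exact h ⟨hpos, hsum, hnorm, hρv⟩
  exact ⟨by rw [EoF, hset, csInf_singleton], by rw [EoA, hset, csSup_singleton]⟩

end PureEnsemble

section Antisymmetric

open Matrix

theorem trace_mul_conjTranspose_self {𝕜 m n : Type*} [RCLike 𝕜] [Fintype m] [Fintype n]
    (M : Matrix m n 𝕜) : (M * Mᴴ).trace = ((∑ x, ∑ y, ‖M x y‖ ^ 2 : ℝ) : 𝕜) := by
  simp [trace, mul_apply, RCLike.mul_conj]

theorem entE_eq_one_of_apply_swap_eq_neg {v : Fin 3 × Fin 3 → ℂ} (hnorm : ∑ x, ‖v x‖ ^ 2 = 1)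
    (hanti : ∀ x, v x.swap = -v x) : entE v = 1 := by
  let M : Matrix (Fin 3) (Fin 3) ℂ := of fun i j => v (i, j)
  have hM : Mᵀ = -M := ext fun i j => hanti (i, j)
  have hMH : Mᴴᵀ = -Mᴴ := by
    rw [← conjTranspose_neg, ← hM]
    rfl
  have htrace : (M * Mᴴ).trace = 1 := by
    rw [trace_mul_conjTranspose_self, ← RCLike.ofReal_one, ← hnorm, Fintype.sum_prod_type]
    rfl
  have htriple : (2 : ℝ) • (M * Mᴴ * M) = M := by
    rw [ofNat_smul_eq_nsmul, two_smul_mul_mul_of_transpose_eq_neg hM hMH, htrace, one_smul]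
  have hflat : (M * Mᴴ) * (M * Mᴴ) = (2⁻¹ : ℝ) • (M * Mᴴ) := by
    rw [← Matrix.mul_assoc, (eq_inv_smul_iff₀ two_ne_zero).2 htriple, smul_mul]
  calc entE v = vnEntropy (M * Mᴴ) := rfl
    _ = -(1 * Real.logb 2 2⁻¹) := by
      rw [vnEntropy_eq_of_mul_self_eq_smul (isHermitian_mul_conjTranspose_self M) hflat, htrace,
        Complex.one_re]
    _ = 1 := by simp

theorem IsPureEnsemble.apply_swap_eq_neg {A ι : Type*} [Fintype A] [Fintype ι]
    {ρ : Matrix (A × A) (A × A) ℂ} {p : ι → ℝ} {v : ι → A × A → ℂ} (h : IsPureEnsemble ρ p v)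
    (hanti : ρ.submatrix id Prod.swap = -ρ) (i : ι) (x : A × A) : v i x.swap = -v i x := by
  classical
  have hker : ρ *ᵥ (Pi.single x.swap 1 + Pi.single x 1) = 0 := by
    ext y
    have hcol : ρ y x.swap = -ρ y x := congrFun₂ hanti y x
    simp [mulVec_add, hcol]
  have horth := h.star_dotProduct_eq_zero hker i
  simpa [dotProduct_add, ← map_add, eq_neg_iff_add_eq_zero] using horth

theorem IsPureEnsemble.entE_eq_one {ι : Type*} [Fintype ι]
    {ρ : Matrix (Fin 3 × Fin 3) (Fin 3 × Fin 3) ℂ} {p : ι → ℝ} {v : ι → Fin 3 × Fin 3 → ℂ}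
    (h : IsPureEnsemble ρ p v) (hanti : ρ.submatrix id Prod.swap = -ρ) (i : ι) :
    entE (v i) = 1 :=
  entE_eq_one_of_apply_swap_eq_neg (h.sum_norm_sq i) (h.apply_swap_eq_neg hanti i)

theorem IsPureEnsemble.sum_mul_entE_eq_one {ι : Type*} [Fintype ι]
    {ρ : Matrix (Fin 3 × Fin 3) (Fin 3 × Fin 3) ℂ} {p : ι → ℝ} {v : ι → Fin 3 × Fin 3 → ℂ}
    (h : IsPureEnsemble ρ p v) (hanti : ρ.submatrix id Prod.swap = -ρ) :
    ∑ i, p i * entE (v i) = 1 := by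
  simp only [h.entE_eq_one hanti, mul_one, h.sum_weight]

theorem posSemidef_one_sub_permMatrix {𝕜 n : Type*} [RCLike 𝕜] [Finite n] [DecidableEq n]
    {σ : Equiv.Perm n} (hσ : σ * σ = 1) : (1 - σ.permMatrix 𝕜).PosSemidef := by
  have := Fintype.ofFinite n
  set P := σ.permMatrix 𝕜
  have hP : Pᴴ = P := by rw [conjTranspose_permMatrix, inv_eq_of_mul_eq_one_right hσ]
  have hPP : P * P = 1 := by rw [← permMatrix_mul, hσ, permMatrix_one]
  have hsq : 1 - P = (1 / 2 : 𝕜) • ((1 - P)ᴴ * (1 - P)) := by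
    have hmul : (1 - P)ᴴ * (1 - P) = (2 : 𝕜) • (1 - P) := by
      rw [conjTranspose_sub, conjTranspose_one, hP, mul_sub, sub_mul, sub_mul, hPP, two_smul]
      simp only [Matrix.mul_one, Matrix.one_mul]
      abel
    rw [hmul, smul_smul]
    norm_num
  rw [hsq]
  exact (posSemidef_conjTranspose_mul_self (1 - P)).smul (by positivity)

theorem wernerAS_eq_smul_one_sub_permMatrix :
    wernerAS = (1 / 6 : ℂ) •
      (1 - Equiv.Perm.permMatrix ℂ (Equiv.prodComm (Fin 3) (Fin 3))) := by
  ext ⟨i, j⟩ ⟨k, l⟩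
  simp [wernerAS, one_apply, PEquiv.toMatrix_apply, Equiv.toPEquiv_apply, and_comm, eq_comm]

theorem wernerAS_isDensityMatrix : IsDensityMatrix wernerAS where
  left := by
    rw [wernerAS_eq_smul_one_sub_permMatrix]
    exact (posSemidef_one_sub_permMatrix (Equiv.ext Prod.swap_swap)).smul (by positivity)
  right := by
    have hdiag (i j : Fin 3) : wernerAS (i, j) (i, j) = if i = j then 0 else 1 / 6 := by
      by_cases hij : i = j <;> simp [wernerAS, hij]
    calc wernerAS.trace = ∑ i : Fin 3, ∑ j : Fin 3, if i = j then (0 : ℂ) else 1 / 6 := by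
          simp only [trace, diag_apply, Fintype.sum_prod_type, hdiag]
      _ = 1 := by norm_num [Finset.sum_ite, Finset.filter_ne]

theorem wernerAS_submatrix_swap : wernerAS.submatrix id Prod.swap = -wernerAS := by
  ext x y
  simp [wernerAS, ← mul_neg]

end Antisymmetric

theorem werner_every_decomposition_entanglement_one_general
    {ρ : Matrix (Fin 3 × Fin 3) (Fin 3 × Fin 3) ℂ} (hρ : IsDensityMatrix ρ)
    (hanti : ρ.submatrix id Prod.swap = -ρ) :
    (∀ (m : ℕ) (p : Fin m → ℝ) (v : Fin m → Fin 3 × Fin 3 → ℂ),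
      (∀ i, 0 < p i) → (∑ i, p i = 1) → (∀ i, ∑ x, ‖v i x‖ ^ 2 = 1) →
      ρ = ∑ i, (p i : ℂ) • Matrix.of (fun x y => v i x * conj (v i y)) →
      (∀ i, entE (v i) = 1) ∧ ∑ i, p i * entE (v i) = 1) ∧
    EoF ρ = 1 ∧ EoA ρ = 1 := by
  refine ⟨fun m p v hpos hsum hnorm hρv => ?_,
    EoF_eq_and_EoA_eq_of_forall_isPureEnsemble hρ fun hv => hv.sum_mul_entE_eq_one hanti⟩
  have hv : IsPureEnsemble ρ p v := ⟨hpos, hsum, hnorm, hρv⟩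
  exact ⟨hv.entE_eq_one hanti, hv.sum_mul_entE_eq_one hanti⟩

/-- every pure-state decomposition of the 3×3 antisymmetric Werner
state has every component of entanglement 1, hence average entanglement 1;
consequently its entanglement of formation and of assistance both equal 1. -/
theorem werner_every_decomposition_entanglement_one :
    (∀ (m : ℕ) (p : Fin m → ℝ) (v : Fin m → Fin 3 × Fin 3 → ℂ),
      (∀ i, 0 < p i) → (∑ i, p i = 1) → (∀ i, ∑ x, ‖v i x‖ ^ 2 = 1) →
      wernerAS = ∑ i, (p i : ℂ) • Matrix.of (fun x y => v i x * conj (v i y)) →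
      (∀ i, entE (v i) = 1) ∧ ∑ i, p i * entE (v i) = 1) ∧
    EoF wernerAS = 1 ∧ EoA wernerAS = 1 :=
  werner_every_decomposition_entanglement_one_general wernerAS_isDensityMatrix
    wernerAS_submatrix_swap
end

section
/- Superadditivity of the entanglement of assistance: let ρ be the density matrix of the 3×3 antisymmetric Werner state, with entries ρ_{(i,j),(k,l)} = (1/6)(δ_{ik}δ_{jl} − δ_{il}δ_{jk}) for i,j,k,l ∈ Fin 3, and let σ be the two-copy state with rows and columns indexed by (Fin 3 × Fin 3) × (Fin 3 × Fin 3) (first component the pair of A-indices, second the pair of B-indices), with entries σ_{((a₁,a₂),(b₁,b₂)),((a₁',a₂'),(b₁',b₂'))} = ρ_{(a₁,b₁),(a₁',b₁')}·ρ_{(a₂,b₂),(a₂',b₂')}. Then there exists a finite decomposition σ = ∑_{i=1}^m p_i v_i v_i† with p_i > 0, ∑_i p_i = 1 and unit vectors v_i such that ∑_i p_i E(v_i) ≥ 5/2; in particular the entanglement of assistance of σ is at least 5/2, strictly greater than twice the entanglement of assistance of ρ (which is 1). -/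
open scoped ComplexConjugate ComplexOrder

/-- Two copies of the Werner state, regrouped so that the first component collects
the pair of A-indices and the second the pair of B-indices. -/
noncomputable def wernerTwo :
    Matrix ((Fin 3 × Fin 3) × (Fin 3 × Fin 3)) ((Fin 3 × Fin 3) × (Fin 3 × Fin 3)) ℂ :=
  Matrix.of fun x y =>
    wernerAS (x.1.1, x.2.1) (y.1.1, y.2.1) * wernerAS (x.1.2, x.2.2) (y.1.2, y.2.2)

/-
A unit vector in the antisymmetric subspace of `ℂ³ ⊗ ℂ³` has Schmidt coefficients
`1/√2, 1/√2, 0`. A pure-state decomposition of `wernerAS` only involves such vectors, so its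
average entropy is exactly `1`.

For two copies, take the vectors of `2 × 2` minors of unitary `3 × 3` matrices `W`. As the cofactors
of `W` are `det W` times its conjugate entries, averaging these vectors over a unitary `1`-design
gives `wernerTwo`. Writing `w` for the vector of entries of `W`, the reduced state `(1 + w w†) / 12`
of each of them has purity `1/6`, hence entropy at least `log₂ 6 > 5/2`.
-/

open Matrix

section ShannonEntropy

variable {ι : Type*} [Fintype ι] {p : ι → ℝ}

lemma neg_sum_mul_logb_le_logb_card (hp : ∀ i, 0 ≤ p i) (hsum : ∑ i, p i = 1) :
    -∑ i, p i * Real.logb 2 (p i) ≤ Real.logb 2 (Fintype.card ι) := by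
  have hcard : (Fintype.card ι : ℝ) ≠ 0 := by
    intro h
    have : IsEmpty ι := Fintype.card_eq_zero_iff.mp (by exact_mod_cast h)
    simp at hsum
  have jensen := Real.concaveOn_negMulLog.le_map_sum (t := Finset.univ)
    (w := fun _ : ι => (Fintype.card ι : ℝ)⁻¹) (fun _ _ => by positivity)
    (by simp [hcard]) (fun i _ => hp i)
  simp only [smul_eq_mul, ← Finset.mul_sum, hsum, mul_one] at jensen
  have hlog : -∑ i, p i * Real.log (p i) ≤ Real.log (Fintype.card ι) := by
    refine le_of_mul_le_mul_left (a := (Fintype.card ι : ℝ)⁻¹) ?_ (by positivity)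
    simpa [Real.negMulLog_eq_neg] using jensen
  simp only [Real.logb, ← mul_div_assoc, ← Finset.sum_div, ← neg_div]
  gcongr

lemma neg_logb_sum_sq_le_neg_sum_mul_logb (hp : ∀ i, 0 ≤ p i) (hsum : ∑ i, p i = 1) :
    -Real.logb 2 (∑ i, p i ^ 2) ≤ -∑ i, p i * Real.logb 2 (p i) := by
  set P := ∑ i, p i ^ 2 with hP
  have hPpos : 0 < P := by
    refine (Finset.sum_nonneg fun i _ => sq_nonneg (p i)).lt_of_ne' fun h => ?_
    have hzero : ∀ i, p i = 0 := fun i => pow_eq_zero_iff two_ne_zero |>.mp <|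
      (Finset.sum_eq_zero_iff_of_nonneg fun i _ => sq_nonneg (p i)).mp h i (Finset.mem_univ i)
    simp [hzero] at hsum
  -- The tangent line of `log` at `P` dominates `log`.
  have tangent : ∀ i, p i * Real.log (p i) ≤ p i * (Real.log P - 1) + p i ^ 2 / P := by
    intro i
    rcases (hp i).eq_or_lt with h | h
    · simp [← h]
    · have := Real.log_le_sub_one_of_pos (div_pos h hPpos)
      rw [Real.log_div h.ne' hPpos.ne'] at this
      calc p i * Real.log (p i) ≤ p i * (Real.log P - 1 + p i / P) := by gcongr; linarith
        _ = _ := by ring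
  have hlog : ∑ i, p i * Real.log (p i) ≤ Real.log P := by
    calc ∑ i, p i * Real.log (p i) ≤ ∑ i, (p i * (Real.log P - 1) + p i ^ 2 / P) :=
          Finset.sum_le_sum fun i _ => tangent i
      _ = Real.log P := by
          rw [Finset.sum_add_distrib, ← Finset.sum_mul, ← Finset.sum_div, hsum, ← hP,
            div_self hPpos.ne']
          ring
  simp only [Real.logb, ← mul_div_assoc, ← Finset.sum_div, neg_le_neg_iff]
  gcongr

end ShannonEntropy

section Eigenvalues

variable {n : Type*} [Fintype n] [DecidableEq n] {A : Matrix n n ℂ} (hA : A.IsHermitian)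
include hA

lemma sum_eigenvalues_sq_eq_re_trace_mul_self :
    ∑ i, hA.eigenvalues i ^ 2 = (A * A).trace.re := by
  have h : (A * A).trace = ((∑ i, hA.eigenvalues i ^ 2 : ℝ) : ℂ) := by
    conv_lhs => rw [hA.spectral_theorem, ← map_mul, Unitary.conjStarAlgAut_apply,
      Matrix.trace_mul_cycle, Unitary.coe_star_mul_self, one_mul, diagonal_mul_diagonal,
      trace_diagonal]
    simp [pow_two]
  rw [h, Complex.ofReal_re]

lemma eigenvalues_mul_self_of_mul_self_eq_smul {c : ℝ} (h : A * A = c • A) (i : n) :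
    hA.eigenvalues i * hA.eigenvalues i = c * hA.eigenvalues i := by
  rw [hA.spectral_theorem, ← map_mul] at h
  have hdiag := (Unitary.conjStarAlgAut ℂ _ hA.eigenvectorUnitary).injective
    (h.trans (map_smul _ (c : ℂ) _).symm)
  have hentry := congrFun (congrFun hdiag i) i
  simp only [diagonal_mul_diagonal, Matrix.smul_apply, diagonal_apply_eq,
    Function.comp_apply, smul_eq_mul] at hentry
  exact Complex.ofReal_injective (by push_cast; exact hentry)

end Eigenvalues

section VonNeumannEntropy

variable {n : Type*} [Fintype n] [DecidableEq n] {ρ : Matrix n n ℂ}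

lemma vnEntropy_eq (h : ρ.IsHermitian) :
    vnEntropy ρ = -∑ i, h.eigenvalues i * Real.logb 2 (h.eigenvalues i) :=
  dif_pos h

namespace IsDensityMatrix

lemma sum_eigenvalues (h : IsDensityMatrix ρ) : ∑ i, h.1.isHermitian.eigenvalues i = 1 := by
  refine Complex.ofReal_injective ?_
  push_cast
  exact h.1.isHermitian.trace_eq_sum_eigenvalues.symm.trans h.2

lemma vnEntropy_le_logb_card (h : IsDensityMatrix ρ) :
    vnEntropy ρ ≤ Real.logb 2 (Fintype.card n) :=
  (vnEntropy_eq h.1.isHermitian).trans_le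
    (neg_sum_mul_logb_le_logb_card h.1.eigenvalues_nonneg h.sum_eigenvalues)

lemma neg_logb_purity_le_vnEntropy (h : IsDensityMatrix ρ) :
    -Real.logb 2 (ρ * ρ).trace.re ≤ vnEntropy ρ := by
  rw [vnEntropy_eq h.1.isHermitian, ← sum_eigenvalues_sq_eq_re_trace_mul_self h.1.isHermitian]
  exact neg_logb_sum_sq_le_neg_sum_mul_logb h.1.eigenvalues_nonneg h.sum_eigenvalues

lemma vnEntropy_of_mul_self_eq_smul (h : IsDensityMatrix ρ) {c : ℝ} (hρ : ρ * ρ = c • ρ) :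
    vnEntropy ρ = -Real.logb 2 c := by
  have hterm : ∀ i, h.1.isHermitian.eigenvalues i * Real.logb 2 (h.1.isHermitian.eigenvalues i)
      = h.1.isHermitian.eigenvalues i * Real.logb 2 c := fun i => by
    rcases mul_eq_mul_right_iff.mp
      (eigenvalues_mul_self_of_mul_self_eq_smul h.1.isHermitian hρ i) with hc | h0
    · rw [hc]
    · rw [h0, zero_mul, zero_mul]
  rw [vnEntropy_eq h.1.isHermitian, Finset.sum_congr rfl fun i _ => hterm i, ← Finset.sum_mul,
    h.sum_eigenvalues, one_mul]

end IsDensityMatrix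

end VonNeumannEntropy

section ReducedState

variable {A B : Type*} [Fintype B]

/-- The reduced state on the first factor of the (not necessarily normalised) pure state `v`;
by definition `entE v` is its von Neumann entropy. -/
def reducedState (v : A × B → ℂ) : Matrix A A ℂ :=
  Matrix.of fun x x' => ∑ y, v (x, y) * conj (v (x', y))

lemma reducedState_eq_mul_conjTranspose (v : A × B → ℂ) :
    reducedState v = (Matrix.of v.curry) * (Matrix.of v.curry)ᴴ := by
  ext x x'
  simp [reducedState, Matrix.mul_apply]

lemma reducedState_smul (r : ℝ) (v : A × B → ℂ) :
    reducedState (r • v) = r ^ 2 • reducedState v := by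
  ext x x'
  simp only [reducedState, Matrix.of_apply, Matrix.smul_apply, Pi.smul_apply, Complex.real_smul,
    map_mul, Complex.conj_ofReal, Complex.ofReal_pow, Finset.mul_sum]
  exact Finset.sum_congr rfl fun y _ => by ring

variable [Fintype A]

lemma trace_reducedState (v : A × B → ℂ) :
    (reducedState v).trace = ((∑ x, ‖v x‖ ^ 2 : ℝ) : ℂ) := by
  simp [reducedState, Matrix.trace, Fintype.sum_prod_type, Complex.mul_conj']

lemma isDensityMatrix_reducedState {v : A × B → ℂ} (hv : ∑ x, ‖v x‖ ^ 2 = 1) :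
    IsDensityMatrix (reducedState v) := by
  refine ⟨?_, by rw [trace_reducedState, hv, Complex.ofReal_one]⟩
  rw [reducedState_eq_mul_conjTranspose]
  exact posSemidef_self_mul_conjTranspose _

end ReducedState

/-- A decomposition `ρ = ∑ i, p i • v i (v i)†` of `ρ` into unit vectors with positive weights
summing to one, indexed by an arbitrary finite type. -/
structure IsPureDecomposition {n ι : Type*} [Fintype n] [Fintype ι] (ρ : Matrix n n ℂ)
    (p : ι → ℝ) (v : ι → n → ℂ) : Prop where
  pos : ∀ i, 0 < p i
  sum_eq_one : ∑ i, p i = 1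
  norm_sq : ∀ i, ∑ x, ‖v i x‖ ^ 2 = 1
  eq_sum : ρ = ∑ i, (p i : ℂ) • Matrix.of fun x y => v i x * conj (v i y)

namespace IsPureDecomposition

variable {n ι κ : Type*} [Fintype n] [Fintype ι] [Fintype κ] {ρ : Matrix n n ℂ} {p : ι → ℝ}
  {v : ι → n → ℂ}

lemma comp_equiv (h : IsPureDecomposition ρ p v) (e : κ ≃ ι) :
    IsPureDecomposition ρ (p ∘ e) (v ∘ e) where
  pos i := h.pos (e i)
  sum_eq_one := (e.sum_comp p).trans h.sum_eq_one
  norm_sq i := h.norm_sq (e i)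
  eq_sum := h.eq_sum.trans (e.sum_comp _).symm

lemma dotProduct_mulVec (h : IsPureDecomposition ρ p v) (z : n → ℂ) :
    star z ⬝ᵥ ρ *ᵥ z = ((∑ i, p i * ‖star (v i) ⬝ᵥ z‖ ^ 2 : ℝ) : ℂ) := by
  have hterm : ∀ i, star z ⬝ᵥ vecMulVec (v i) (star (v i)) *ᵥ z = ‖star (v i) ⬝ᵥ z‖ ^ 2 := by
    intro i
    rw [vecMulVec_mulVec, op_smul_eq_smul, dotProduct_smul, star_dotProduct z,
      ← Complex.mul_conj']
    rfl
  rw [h.eq_sum, sum_mulVec, dotProduct_sum]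
  push_cast
  refine Finset.sum_congr rfl fun i _ => ?_
  rw [smul_mulVec, dotProduct_smul, smul_eq_mul, ← hterm]
  rfl

lemma dotProduct_eq_zero_of_mulVec_eq_zero (h : IsPureDecomposition ρ p v) {z : n → ℂ}
    (hz : ρ *ᵥ z = 0) (i : ι) : star (v i) ⬝ᵥ z = 0 := by
  have hsum : ∑ i, p i * ‖star (v i) ⬝ᵥ z‖ ^ 2 = 0 := by
    have hquad := h.dotProduct_mulVec z
    rw [hz, dotProduct_zero] at hquad
    exact_mod_cast hquad.symm
  have hterm := (Finset.sum_eq_zero_iff_of_nonneg fun i _ =>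
    mul_nonneg (h.pos i).le (sq_nonneg _)).mp hsum i (Finset.mem_univ i)
  simpa [(h.pos i).ne'] using hterm

lemma of_norm_sq_eq [Nonempty ι] {N : ℝ} (hN : 0 < N) (hv : ∀ i, ∑ x, ‖v i x‖ ^ 2 = N)
    (hρ : ∀ x y, ρ x y = (Fintype.card ι * N : ℂ)⁻¹ * ∑ i, v i x * conj (v i y)) :
    IsPureDecomposition ρ (fun _ => (Fintype.card ι : ℝ)⁻¹) (fun i => (√N)⁻¹ • v i) where
  pos _ := by positivity
  sum_eq_one := by simp
  norm_sq i := by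
    simp only [Pi.smul_apply, norm_smul, mul_pow, ← Finset.mul_sum, hv]
    simp [Real.sq_sqrt hN.le, hN.ne']
  eq_sum := by
    have hsqrt : ((√N : ℝ) : ℂ)⁻¹ * ((√N : ℝ) : ℂ)⁻¹ = (N : ℂ)⁻¹ := by
      rw [← mul_inv, ← Complex.ofReal_mul, Real.mul_self_sqrt hN.le]
    ext x y
    rw [hρ, Matrix.sum_apply, Finset.mul_sum]
    refine Finset.sum_congr rfl fun i _ => ?_
    simp only [Matrix.smul_apply, Matrix.of_apply, Pi.smul_apply, Complex.real_smul, map_mul,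
      Complex.ofReal_inv, map_inv₀, Complex.conj_ofReal, smul_eq_mul, mul_inv,
      Complex.ofReal_natCast, ← hsqrt]
    ring

end IsPureDecomposition

section EntanglementOfAssistance

variable {A B ι : Type*} [Fintype A] [DecidableEq A] [Fintype B] [Fintype ι]
  {ρ : Matrix (A × B) (A × B) ℂ} {p : ι → ℝ} {v : ι → A × B → ℂ} {c : ℝ}

lemma entE_le_logb_card {v : A × B → ℂ} (hv : ∑ x, ‖v x‖ ^ 2 = 1) :
    entE v ≤ Real.logb 2 (Fintype.card A) :=
  (isDensityMatrix_reducedState hv).vnEntropy_le_logb_card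

lemma IsPureDecomposition.sum_entE_le (h : IsPureDecomposition ρ p v)
    (hc : ∀ i, entE (v i) ≤ c) : ∑ i, p i * entE (v i) ≤ c :=
  calc ∑ i, p i * entE (v i) ≤ ∑ i, p i * c :=
        Finset.sum_le_sum fun i _ => mul_le_mul_of_nonneg_left (hc i) (h.pos i).le
    _ = c := by rw [← Finset.sum_mul, h.sum_eq_one, one_mul]

lemma IsPureDecomposition.le_sum_entE (h : IsPureDecomposition ρ p v)
    (hc : ∀ i, c ≤ entE (v i)) : c ≤ ∑ i, p i * entE (v i) :=
  calc c = ∑ i, p i * c := by rw [← Finset.sum_mul, h.sum_eq_one, one_mul]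
    _ ≤ ∑ i, p i * entE (v i) :=
        Finset.sum_le_sum fun i _ => mul_le_mul_of_nonneg_left (hc i) (h.pos i).le

lemma IsPureDecomposition.sum_entE_le_EoA (h : IsPureDecomposition ρ p v) :
    ∑ i, p i * entE (v i) ≤ EoA ρ := by
  let e := (Fintype.equivFin ι).symm
  have hfin := h.comp_equiv e
  refine le_csSup ⟨Real.logb 2 (Fintype.card A), ?_⟩ ⟨Fintype.card ι, p ∘ e, v ∘ e, hfin.pos,
    hfin.sum_eq_one, hfin.norm_sq, hfin.eq_sum, (e.sum_comp fun i => p i * entE (v i)).symm⟩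
  rintro _ ⟨m, q, w, hpos, hsum, hnorm, heq, rfl⟩
  exact IsPureDecomposition.sum_entE_le ⟨hpos, hsum, hnorm, heq⟩
    fun i => entE_le_logb_card (hnorm i)

lemma IsPureDecomposition.EoA_le (h : IsPureDecomposition ρ p v)
    (hc : ∀ {m : ℕ} {q : Fin m → ℝ} {w : Fin m → A × B → ℂ}, IsPureDecomposition ρ q w →
      ∀ i, entE (w i) ≤ c) :
    EoA ρ ≤ c := by
  let e := (Fintype.equivFin ι).symm
  have hfin := h.comp_equiv e
  refine csSup_le ⟨_, Fintype.card ι, p ∘ e, v ∘ e, hfin.pos, hfin.sum_eq_one, hfin.norm_sq,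
    hfin.eq_sum, rfl⟩ ?_
  rintro _ ⟨m, q, w, hpos, hsum, hnorm, heq, rfl⟩
  exact IsPureDecomposition.sum_entE_le ⟨hpos, hsum, hnorm, heq⟩ (hc ⟨hpos, hsum, hnorm, heq⟩)

end EntanglementOfAssistance

section LeviCivita

/-- The Levi-Civita symbol `ε_{abe}`, as a vector in the pair `x = (a, b)`. -/
def leviCivita (e : Fin 3) (x : Fin 3 × Fin 3) : ℤ :=
  if x = (e + 1, e + 2) then 1 else if x = (e + 2, e + 1) then -1 else 0

lemma sum_leviCivita_mul_leviCivita (x y : Fin 3 × Fin 3) :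
    ∑ e, leviCivita e x * leviCivita e y =
      (if x.1 = y.1 ∧ x.2 = y.2 then 1 else 0) - (if x.1 = y.2 ∧ x.2 = y.1 then 1 else 0) := by
  decide +revert +kernel

lemma sum_snd_leviCivita_mul_leviCivita (e f a b : Fin 3) :
    ∑ c, leviCivita e (a, c) * leviCivita f (b, c) =
      (if e = f ∧ a = b then 1 else 0) - (if e = b ∧ f = a then 1 else 0) := by
  decide +revert +kernel

lemma sum_leviCivita_sq (e : Fin 3) : ∑ x, leviCivita e x ^ 2 = 2 := by
  decide +revert

lemma sum_leviCivita_mul_of_antisymm {v : Fin 3 × Fin 3 → ℂ} (hv : ∀ x, v x.swap = -v x)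
    (x : Fin 3 × Fin 3) :
    ∑ e, (leviCivita e x : ℂ) * v (e + 1, e + 2) = v x := by
  have hdiag : ∀ a, v (a, a) = 0 := fun a => self_eq_neg.mp (hv (a, a))
  obtain ⟨a, b⟩ := x
  fin_cases a <;> fin_cases b <;>
    simp [Fin.sum_univ_three, leviCivita, hdiag, ← hv]

lemma wernerAS_eq (x y : Fin 3 × Fin 3) :
    wernerAS x y = 1 / 6 * ∑ e, (leviCivita e x : ℂ) * leviCivita e y := by
  rw [wernerAS, Matrix.of_apply]
  congr 1
  exact_mod_cast (congrArg (Int.cast (R := ℂ)) (sum_leviCivita_mul_leviCivita x y)).symm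

/-- The product `ε_{a₁b₁e₁} ε_{a₂b₂e₂}` of two Levi-Civita symbols, as a vector on two copies
with the indices regrouped as `x = ((a₁, a₂), (b₁, b₂))`. -/
def leviCivitaTwo (e : Fin 3 × Fin 3) (x : (Fin 3 × Fin 3) × (Fin 3 × Fin 3)) : ℤ :=
  leviCivita e.1 (x.1.1, x.2.1) * leviCivita e.2 (x.1.2, x.2.2)

lemma wernerTwo_eq (x y : (Fin 3 × Fin 3) × (Fin 3 × Fin 3)) :
    wernerTwo x y = 1 / 36 * ∑ e, (leviCivitaTwo e x : ℂ) * leviCivitaTwo e y := by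
  simp only [wernerTwo, Matrix.of_apply, wernerAS_eq, mul_mul_mul_comm (1 / 6 : ℂ),
    Fintype.sum_mul_sum, Fintype.sum_prod_type, leviCivitaTwo, Int.cast_mul]
  norm_num [mul_mul_mul_comm]

end LeviCivita

section Antisymmetric

variable {v : Fin 3 × Fin 3 → ℂ}

lemma reducedState_sum_leviCivita_mul (u : Fin 3 → ℂ) :
    reducedState (fun x => ∑ e, (leviCivita e x : ℂ) * u e) =
      (u ⬝ᵥ star u) • 1 - vecMulVec (star u) u := by
  ext a b
  calc ∑ c, (∑ e, (leviCivita e (a, c) : ℂ) * u e) * conj (∑ f, (leviCivita f (b, c) : ℂ) * u f)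
      = ∑ e, ∑ f, ((∑ c, leviCivita e (a, c) * leviCivita f (b, c) : ℤ) : ℂ)
          * (u e * conj (u f)) := by
        simp only [map_sum, map_mul, map_intCast, Int.cast_sum, Int.cast_mul, Finset.sum_mul_sum]
        simp only [Finset.sum_mul]
        rw [Finset.sum_comm]
        refine Finset.sum_congr rfl fun e _ => ?_
        rw [Finset.sum_comm]
        exact Finset.sum_congr rfl fun f _ => Finset.sum_congr rfl fun c _ => by ring
    _ = ((u ⬝ᵥ star u) • 1 - vecMulVec (star u) u) a b := by
        simp only [sum_snd_leviCivita_mul_leviCivita, Int.cast_sub, Int.cast_ite, Int.cast_one,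
          Int.cast_zero, sub_mul, Finset.sum_sub_distrib, ite_mul, one_mul, zero_mul, ite_and,
          Finset.sum_ite_eq, Finset.mem_univ, if_true]
        simp [Matrix.one_apply, vecMulVec_apply, dotProduct, mul_comm]

lemma reducedState_mul_self_of_antisymm (hv : ∀ x, v x.swap = -v x)
    (hnorm : ∑ x, ‖v x‖ ^ 2 = 1) :
    reducedState v * reducedState v = (1 / 2 : ℝ) • reducedState v := by
  set u : Fin 3 → ℂ := fun e => v (e + 1, e + 2)
  have hred : reducedState v = (u ⬝ᵥ star u) • 1 - vecMulVec (star u) u := by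
    rw [← reducedState_sum_leviCivita_mul, funext (sum_leviCivita_mul_of_antisymm hv)]
  have huu : u ⬝ᵥ star u = (1 / 2 : ℝ) := by
    have htrace : (u ⬝ᵥ star u) * 3 - u ⬝ᵥ star u = 1 := by
      simpa [hred, hnorm, dotProduct_comm (star u)] using trace_reducedState v
    push_cast
    linear_combination htrace / 2
  rw [hred, huu]
  simp only [sub_mul, mul_sub, smul_mul_assoc, one_mul, mul_smul_comm, mul_one,
    vecMulVec_mul_vecMulVec, huu, vecMulVec_smul, sub_self, sub_zero]
  rfl

lemma entE_eq_one_of_antisymm (hv : ∀ x, v x.swap = -v x) (hnorm : ∑ x, ‖v x‖ ^ 2 = 1) :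
    entE v = 1 := by
  refine ((isDensityMatrix_reducedState hnorm).vnEntropy_of_mul_self_eq_smul
    (reducedState_mul_self_of_antisymm hv hnorm)).trans ?_
  rw [one_div, Real.logb_inv, neg_neg, Real.logb_self_eq_one one_lt_two]

lemma IsPureDecomposition.antisymm {ι : Type*} [Fintype ι] {p : ι → ℝ}
    {v : ι → Fin 3 × Fin 3 → ℂ} (h : IsPureDecomposition wernerAS p v) (i : ι)
    (x : Fin 3 × Fin 3) : v i x.swap = -v i x := by
  have hker : wernerAS *ᵥ (Pi.single x.swap 1 + Pi.single x 1) = 0 := by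
    rw [mulVec_add, mulVec_single_one, mulVec_single_one]
    ext y
    simp only [Pi.add_apply, Matrix.col_apply, wernerAS, Matrix.of_apply, Prod.fst_swap,
      Prod.snd_swap, Pi.zero_apply]
    ring
  have horth := h.dotProduct_eq_zero_of_mulVec_eq_zero hker i
  rw [dotProduct_add, dotProduct_single_one, dotProduct_single_one, Pi.star_apply, Pi.star_apply,
    ← star_add, star_eq_zero] at horth
  exact eq_neg_of_add_eq_zero_left horth

lemma isPureDecomposition_wernerAS :
    IsPureDecomposition wernerAS (fun _ => (Fintype.card (Fin 3) : ℝ)⁻¹)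
      (fun e => (√2)⁻¹ • fun x => (leviCivita e x : ℂ)) := by
  refine .of_norm_sq_eq two_pos (fun e => ?_) fun x y => ?_
  · simpa using mod_cast sum_leviCivita_sq e
  · rw [wernerAS_eq]
    norm_num [map_intCast]

lemma EoA_wernerAS : EoA wernerAS = 1 := by
  refine le_antisymm ?_ ?_
  · exact isPureDecomposition_wernerAS.EoA_le fun h i =>
      (entE_eq_one_of_antisymm (h.antisymm i) (h.norm_sq i)).le
  · have h := isPureDecomposition_wernerAS
    exact (h.le_sum_entE fun i => (entE_eq_one_of_antisymm (h.antisymm i) (h.norm_sq i)).ge).trans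
      h.sum_entE_le_EoA

end Antisymmetric

section TwoByTwoMinors

variable {n : Type*}

/-- The `2 × 2` minors of `W`, as a vector on two copies of a bipartite system: the first copy
`(a₁, b₁)` selects the rows and the second copy `(a₂, b₂)` selects the columns, so that the
vector is antisymmetric in each copy. -/
def minorVec (W : Matrix n n ℂ) (x : (n × n) × (n × n)) : ℂ :=
  W x.1.1 x.1.2 * W x.2.1 x.2.2 - W x.1.1 x.2.2 * W x.2.1 x.1.2

variable [Fintype n] [DecidableEq n] {W : Matrix n n ℂ}

lemma sum_mul_conj_row_of_mem_unitaryGroup (hW : W ∈ unitaryGroup n ℂ) (a b : n) :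
    ∑ c, W a c * conj (W b c) = if a = b then 1 else 0 := by
  simpa [Matrix.mul_apply, Matrix.one_apply] using
    congrFun (congrFun (mem_unitaryGroup_iff.mp hW) a) b

lemma sum_mul_conj_col_of_mem_unitaryGroup (hW : W ∈ unitaryGroup n ℂ) (a b : n) :
    ∑ c, W c a * conj (W c b) = if a = b then 1 else 0 := by
  simpa [Matrix.mul_apply, Matrix.one_apply, mul_comm, eq_comm] using
    congrFun (congrFun (mem_unitaryGroup_iff'.mp hW) b) a

lemma uncurry_dotProduct_star (hW : W ∈ unitaryGroup n ℂ) :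
    W.uncurry ⬝ᵥ star W.uncurry = Fintype.card n := by
  calc W.uncurry ⬝ᵥ star W.uncurry = ∑ a, ∑ b, W a b * conj (W a b) := Fintype.sum_prod_type _
    _ = Fintype.card n := by simp [sum_mul_conj_row_of_mem_unitaryGroup hW]

lemma reducedState_minorVec (hW : W ∈ unitaryGroup n ℂ) :
    reducedState (minorVec W) =
      1 + ((Fintype.card n : ℂ) - 2) • vecMulVec W.uncurry (star W.uncurry) := by
  have hrow := sum_mul_conj_row_of_mem_unitaryGroup hW
  ext ⟨a, b⟩ ⟨a', b'⟩
  have hself : ∑ c, ∑ d, W c d * conj (W c d) = Fintype.card n := by simp [hrow]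
  have hcross : ∑ c, ∑ d, W a d * conj (W c d) * W c b = W a b := by
    simp [← Finset.sum_mul, hrow]
  have hcross' : ∑ c, ∑ d, W c d * conj (W a' d) * conj (W c b') = conj (W a' b') := by
    simp [← Finset.sum_mul, hrow]
  have hdelta : ∑ c, ∑ d, W a d * conj (W a' d) * (W c b * conj (W c b')) =
      if (a, b) = (a', b') then 1 else 0 := by
    simp_rw [← Finset.sum_mul, hrow, ← Finset.mul_sum, sum_mul_conj_col_of_mem_unitaryGroup hW,
      Prod.mk.injEq, ite_and, ite_mul, one_mul, zero_mul]
  calc ∑ y, minorVec W ((a, b), y) * conj (minorVec W ((a', b'), y))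
      = W a b * conj (W a' b') * (∑ c, ∑ d, W c d * conj (W c d))
        - W a b * (∑ c, ∑ d, W c d * conj (W a' d) * conj (W c b'))
        - conj (W a' b') * (∑ c, ∑ d, W a d * conj (W c d) * W c b)
        + ∑ c, ∑ d, W a d * conj (W a' d) * (W c b * conj (W c b')) := by
        simp only [minorVec, Fintype.sum_prod_type, map_sub, map_mul, Finset.mul_sum,
          ← Finset.sum_sub_distrib, ← Finset.sum_add_distrib]
        exact Finset.sum_congr rfl fun c _ => Finset.sum_congr rfl fun d _ => by ring
    _ = (if (a, b) = (a', b') then 1 else 0)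
        + ((Fintype.card n : ℂ) - 2) * (W a b * conj (W a' b')) := by
        rw [hself, hcross, hcross', hdelta]
        ring

lemma sum_norm_sq_minorVec (hW : W ∈ unitaryGroup n ℂ) :
    ∑ x, ‖minorVec W x‖ ^ 2 = 2 * Fintype.card n * ((Fintype.card n : ℝ) - 1) := by
  refine Complex.ofReal_injective ?_
  rw [← trace_reducedState, reducedState_minorVec hW, trace_add, trace_one, trace_smul,
    trace_vecMulVec, uncurry_dotProduct_star hW, Fintype.card_prod]
  push_cast
  simp only [smul_eq_mul]
  ring

lemma trace_reducedState_minorVec_mul_self (hW : W ∈ unitaryGroup n ℂ) :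
    (reducedState (minorVec W) * reducedState (minorVec W)).trace =
      Fintype.card n * (Fintype.card n - 1 : ℂ) *
        ((Fintype.card n : ℂ) ^ 2 - 3 * Fintype.card n + 4) := by
  simp only [reducedState_minorVec hW, add_mul, mul_add, one_mul, mul_one, smul_mul_assoc,
    mul_smul_comm, vecMulVec_mul_vecMulVec, vecMulVec_smul, trace_add, trace_smul, trace_one,
    trace_vecMulVec, dotProduct_comm (star W.uncurry), uncurry_dotProduct_star hW,
    Fintype.card_prod, Nat.cast_mul, smul_eq_mul]
  ring

end TwoByTwoMinors

lemma adjugate_eq_det_smul_star {n : Type*} [Fintype n] [DecidableEq n] {W : Matrix n n ℂ}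
    (hW : W ∈ unitaryGroup n ℂ) : W.adjugate = W.det • star W :=
  calc W.adjugate = star W * W * W.adjugate := by rw [mem_unitaryGroup_iff'.mp hW, one_mul]
    _ = W.det • star W := by rw [mul_assoc, mul_adjugate, mul_smul_comm, mul_one]

lemma adjugate_apply_eq_minorVec (W : Matrix (Fin 3) (Fin 3) ℂ) (e f : Fin 3) :
    W.adjugate f e = minorVec W ((e + 1, f + 1), (e + 2, f + 2)) := by
  rw [adjugate_fin_three]
  fin_cases e <;> fin_cases f <;> simp [minorVec] <;> ring

lemma minorVec_eq {W : Matrix (Fin 3) (Fin 3) ℂ} (hW : W ∈ unitaryGroup (Fin 3) ℂ)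
    (x : (Fin 3 × Fin 3) × (Fin 3 × Fin 3)) :
    minorVec W x = W.det * ∑ e, (leviCivitaTwo e x : ℂ) * conj (W e.1 e.2) := by
  obtain ⟨⟨a₁, a₂⟩, ⟨b₁, b₂⟩⟩ := x
  have hcof : ∀ e f, minorVec W ((e + 1, f + 1), (e + 2, f + 2)) = W.det * conj (W e f) :=
    fun e f => by
      rw [← adjugate_apply_eq_minorVec, adjugate_eq_det_smul_star hW]
      rfl
  have hrows := sum_leviCivita_mul_of_antisymm (v := fun y => minorVec W ((y.1, a₂), (y.2, b₂)))
    (fun y => by simp only [minorVec, Prod.fst_swap, Prod.snd_swap]; ring) (a₁, b₁)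
  have hcols := fun e => sum_leviCivita_mul_of_antisymm
    (v := fun y => minorVec W ((e + 1, y.1), (e + 2, y.2)))
    (fun y => by simp only [minorVec, Prod.fst_swap, Prod.snd_swap]; ring) (a₂, b₂)
  simp only at hrows hcols
  simp only [Fintype.sum_prod_type, leviCivitaTwo, Int.cast_mul]
  rw [← hrows, Finset.mul_sum]
  refine Finset.sum_congr rfl fun e _ => ?_
  rw [← hcols, Finset.mul_sum, Finset.mul_sum]
  refine Finset.sum_congr rfl fun f _ => ?_
  rw [hcof]
  ring

section UnitaryOneDesign

variable {n ι : Type*} [Fintype n] [DecidableEq n] [Fintype ι]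

/-- A unitary `1`-design: a finite family of unitary matrices over which `U ⊗ Ū` has the same
average as over the Haar measure. -/
structure IsUnitaryOneDesign (W : ι → Matrix n n ℂ) : Prop where
  mem_unitaryGroup : ∀ i, W i ∈ unitaryGroup n ℂ
  sum_mul_conj : ∀ a b a' b', ∑ i, W i a b * conj (W i a' b') =
    if a = a' ∧ b = b' then (Fintype.card ι / Fintype.card n : ℂ) else 0

lemma IsUnitaryOneDesign.sum_sum_mul_conj {W : ι → Matrix n n ℂ} (hW : IsUnitaryOneDesign W)
    (f g : n × n → ℂ) :
    ∑ i, (∑ e, f e * conj (W i e.1 e.2)) * conj (∑ e, g e * conj (W i e.1 e.2)) =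
      (Fintype.card ι / Fintype.card n) * ∑ e, f e * conj (g e) := by
  calc ∑ i, (∑ e, f e * conj (W i e.1 e.2)) * conj (∑ e, g e * conj (W i e.1 e.2))
      = ∑ e, ∑ e', f e * conj (g e') * ∑ i, W i e'.1 e'.2 * conj (W i e.1 e.2) := by
        simp only [map_sum, map_mul, Complex.conj_conj, Finset.sum_mul_sum]
        simp only [Finset.mul_sum]
        rw [Finset.sum_comm]
        refine Finset.sum_congr rfl fun e _ => ?_
        rw [Finset.sum_comm]
        exact Finset.sum_congr rfl fun e' _ => Finset.sum_congr rfl fun i _ => by ring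
    _ = (Fintype.card ι / Fintype.card n) * ∑ e, f e * conj (g e) := by
        simp only [hW.sum_mul_conj, ← Prod.ext_iff, mul_ite, mul_zero, Finset.sum_ite_eq',
          Finset.mem_univ, if_true]
        rw [← Finset.sum_mul, mul_comm]

end UnitaryOneDesign

section Weyl

variable {G : Type*} [AddCommGroup G] [Fintype G] [DecidableEq G]

/-- The Weyl (clock-and-shift) matrices of a finite abelian group `G`: translation by `i.1`
followed by modulation by the character `i.2`. -/
noncomputable def weyl (i : G × AddChar G ℂ) : Matrix G G ℂ :=
  Matrix.of fun a b => if a = b + i.1 then i.2 a else 0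

lemma weyl_mem_unitaryGroup (i : G × AddChar G ℂ) : weyl i ∈ unitaryGroup G ℂ := by
  rw [mem_unitaryGroup_iff]
  ext a a'
  simp only [weyl, Matrix.mul_apply, star_apply, Matrix.of_apply]
  simp only [← sub_eq_iff_eq_add, ite_mul, zero_mul, Finset.sum_ite_eq, Finset.mem_univ, if_true]
  by_cases h : a = a'
  · subst h
    simp [Complex.mul_conj']
  · simp [h, Ne.symm h]

lemma isUnitaryOneDesign_weyl : IsUnitaryOneDesign (weyl (G := G)) where
  mem_unitaryGroup := weyl_mem_unitaryGroup
  sum_mul_conj a b a' b' := by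
    have hchar : ∑ χ : AddChar G ℂ, χ a * conj (χ a') =
        if a = a' then (Fintype.card G : ℂ) else 0 := by
      simp only [← AddChar.map_neg_eq_conj, ← AddChar.map_add_eq_mul,
        AddChar.sum_apply_eq_ite, add_neg_eq_zero]
    have hcard : (Fintype.card (G × AddChar G ℂ) / Fintype.card G : ℂ) = Fintype.card G := by
      rw [Fintype.card_prod, AddChar.card_eq, Nat.cast_mul]
      exact mul_self_div_self _
    calc ∑ i, weyl i a b * conj (weyl i a' b')
        = ∑ g, (if a - b = g ∧ a' - b' = g then ∑ χ : AddChar G ℂ, χ a * conj (χ a') else 0) := by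
          simp only [Fintype.sum_prod_type, weyl, Matrix.of_apply, sub_eq_iff_eq_add']
          refine Finset.sum_congr rfl fun g _ => ?_
          split_ifs <;> simp_all
      _ = if a = a' ∧ b = b' then (Fintype.card G : ℂ) else 0 := by
          rw [hchar]
          by_cases ha : a = a'
          · subst ha
            simp [ite_and, eq_comm]
          · simp [ha]
      _ = _ := by rw [hcard]

end Weyl


section TwoCopies

lemma logb_two_six_le_entE_minorVec {W : Matrix (Fin 3) (Fin 3) ℂ}
    (hW : W ∈ unitaryGroup (Fin 3) ℂ) : Real.logb 2 6 ≤ entE ((√12)⁻¹ • minorVec W) := by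
  have hnorm : ∑ x, ‖((√12)⁻¹ • minorVec W) x‖ ^ 2 = 1 := by
    simp only [Pi.smul_apply, norm_smul, mul_pow, ← Finset.mul_sum, sum_norm_sq_minorVec hW]
    norm_num
  have hpurity : (reducedState ((√12)⁻¹ • minorVec W) *
      reducedState ((√12)⁻¹ • minorVec W)).trace.re = 6⁻¹ := by
    rw [reducedState_smul, smul_mul_smul_comm, trace_smul,
      trace_reducedState_minorVec_mul_self hW, inv_pow, Real.sq_sqrt (by positivity)]
    norm_num
  calc Real.logb 2 6 = -Real.logb 2 6⁻¹ := by rw [Real.logb_inv, neg_neg]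
    _ ≤ entE ((√12)⁻¹ • minorVec W) :=
      hpurity ▸ (isDensityMatrix_reducedState hnorm).neg_logb_purity_le_vnEntropy

lemma five_halves_le_logb_two_six : 5 / 2 ≤ Real.logb 2 6 := by
  rw [Real.le_logb_iff_rpow_le one_lt_two (by positivity)]
  refine le_of_sq_le_sq ?_ (by positivity)
  norm_num [← Real.rpow_mul_natCast]

lemma IsUnitaryOneDesign.isPureDecomposition_wernerTwo {ι : Type*} [Fintype ι] [Nonempty ι]
    {W : ι → Matrix (Fin 3) (Fin 3) ℂ} (hW : IsUnitaryOneDesign W) :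
    IsPureDecomposition wernerTwo (fun _ => (Fintype.card ι : ℝ)⁻¹)
      (fun i => (√12)⁻¹ • minorVec (W i)) := by
  refine .of_norm_sq_eq (by norm_num) (fun i => ?_) fun x y => ?_
  · rw [sum_norm_sq_minorVec (hW.mem_unitaryGroup i)]
    norm_num
  · have hdet : ∀ i, (W i).det * conj (W i).det = 1 := fun i =>
      Unitary.mul_star_self_of_mem (det_of_mem_unitary (hW.mem_unitaryGroup i))
    have hterm : ∀ i, minorVec (W i) x * conj (minorVec (W i) y) =
        (∑ e, (leviCivitaTwo e x : ℂ) * conj (W i e.1 e.2)) *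
          conj (∑ e, (leviCivitaTwo e y : ℂ) * conj (W i e.1 e.2)) := fun i => by
      rw [minorVec_eq (hW.mem_unitaryGroup i), minorVec_eq (hW.mem_unitaryGroup i), map_mul,
        mul_mul_mul_comm, hdet, one_mul]
    have hcard : (Fintype.card ι : ℂ) ≠ 0 := Nat.cast_ne_zero.mpr Fintype.card_ne_zero
    simp only [hterm, hW.sum_sum_mul_conj, map_intCast, wernerTwo_eq, Fintype.card_fin]
    push_cast
    field_simp
    ring

end TwoCopies

/-- superadditivity of the entanglement of assistance.  Two copies of
the 3×3 antisymmetric Werner state admit a pure-state decomposition with average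
entanglement at least `5/2`; in particular `EoA(σ) ≥ 5/2 > 2 = 2·EoA(ρ)`. -/
theorem eoa_superadditive :
    (∃ (m : ℕ) (p : Fin m → ℝ) (v : Fin m → (Fin 3 × Fin 3) × (Fin 3 × Fin 3) → ℂ),
      (∀ i, 0 < p i) ∧ (∑ i, p i = 1) ∧ (∀ i, ∑ x, ‖v i x‖ ^ 2 = 1) ∧
      wernerTwo = ∑ i, (p i : ℂ) • Matrix.of (fun x y => v i x * conj (v i y)) ∧
      5/2 ≤ ∑ i, p i * entE (v i)) ∧
    5/2 ≤ EoA wernerTwo ∧ EoA wernerAS = 1 ∧ 2 * EoA wernerAS < EoA wernerTwo := by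
  have hdecomp := (isUnitaryOneDesign_weyl (G := Fin 3)).isPureDecomposition_wernerTwo
  have hentE := fun i => five_halves_le_logb_two_six.trans
    (logb_two_six_le_entE_minorVec (weyl_mem_unitaryGroup (G := Fin 3) i))
  have hfin := hdecomp.comp_equiv (Fintype.equivFin _).symm
  have hTwo : 5 / 2 ≤ EoA wernerTwo := (hdecomp.le_sum_entE hentE).trans hdecomp.sum_entE_le_EoA
  refine ⟨⟨_, _, _, hfin.pos, hfin.sum_eq_one, hfin.norm_sq, hfin.eq_sum,
    hfin.le_sum_entE fun _ => hentE _⟩, hTwo, EoA_wernerAS, ?_⟩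
  rw [EoA_wernerAS]
  linarith
end

section
/- Entanglement of formation of a mixture of two Bell states: let α, β ≥ 0 with α² + β² = 1, let Φ⁺ = (1/√2)(|00⟩ + |11⟩) and Φ⁻ = (1/√2)(|00⟩ − |11⟩) in ℂ²⊗ℂ² (indexed by Fin 2 × Fin 2), and let ρ = α²·Φ⁺(Φ⁺)† + β²·Φ⁻(Φ⁻)†. Then the entanglement of formation of ρ equals H₂(1/2 − αβ). -/
open scoped ComplexConjugate ComplexOrder

/-- The binary entropy `H₂(x) = −x log₂ x − (1−x) log₂ (1−x)`. -/
noncomputable def binEnt (x : ℝ) : ℝ :=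
  -(x * Real.logb 2 x) - (1 - x) * Real.logb 2 (1 - x)

/-- The Bell state `Φ⁺ = (1/√2)(|00⟩ + |11⟩)`. -/
noncomputable def PhiPlus : Fin 2 × Fin 2 → ℂ :=
  fun x => if x.1 = x.2 then ((1 / Real.sqrt 2 : ℝ) : ℂ) else 0

/-- The Bell state `Φ⁻ = (1/√2)(|00⟩ − |11⟩)`. -/
noncomputable def PhiMinus : Fin 2 × Fin 2 → ℂ :=
  fun x => if x = (0, 0) then ((1 / Real.sqrt 2 : ℝ) : ℂ)
    else if x = (1, 1) then -((1 / Real.sqrt 2 : ℝ) : ℂ) else 0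

/-!
A unit vector `v` of two qubits has a reduced state with eigenvalues `(1 ± √(1 - C²)) / 2`, where
`C = 2 |v₀₀ v₁₁ - v₀₁ v₁₀|` is its concurrence, so its entanglement is a function `𝓔 C`. This
function is increasing and convex on `[0, 1]`: substituting `C = 1 / cosh u`, its derivative is
proportional to `u / sinh u`, which decreases in `u > 0`, while `u` decreases in `C`. If `ρ` has no
weight on `|01⟩`, then neither has any vector of a decomposition of `ρ`, hence the average
concurrence is at least `2 |⟨00|ρ|11⟩|`, and Jensen's inequality bounds the average entanglement
below by `𝓔 (2 |⟨00|ρ|11⟩|)`. For the Bell mixture this is `𝓔 |α² - β²| = H₂(1/2 - αβ)`, attained by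
the equal mixture of the two vectors `α Φ⁺ ± β Φ⁻`, both of which have concurrence `|α² - β²|`.
-/

/-! ### Hyperbolic sine and binary entropy -/

lemma convexOn_sinh : ConvexOn ℝ (Set.Ici 0) Real.sinh := by
  refine MonotoneOn.convexOn_of_deriv (convex_Ici 0) Real.continuous_sinh.continuousOn
    Real.differentiable_sinh.differentiableOn ?_
  rw [Real.deriv_sinh, interior_Ici]
  exact Real.cosh_strictMonoOn.monotoneOn.mono Set.Ioi_subset_Ici_self

lemma antitoneOn_div_sinh : AntitoneOn (fun u ↦ u / Real.sinh u) (Set.Ioi 0) := by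
  intro u hu w hw huw
  have slope_le : Real.sinh u / u ≤ Real.sinh w / w := by
    simpa using convexOn_sinh.secant_mono Set.self_mem_Ici (Set.Ioi_subset_Ici_self hu)
      (Set.Ioi_subset_Ici_self hw) hu.ne' hw.ne' huw
  have sinh_div_pos : 0 < Real.sinh u / u := div_pos (Real.sinh_pos_iff.2 hu) hu
  simpa using inv_anti₀ sinh_div_pos slope_le

lemma binEnt_eq_binEntropy_div_log_two (x : ℝ) : binEnt x = Real.binEntropy x / Real.log 2 := by
  unfold binEnt Real.binEntropy Real.logb
  rw [Real.log_inv, Real.log_inv]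
  ring

lemma binEnt_one_sub (x : ℝ) : binEnt (1 - x) = binEnt x := by
  simp only [binEnt_eq_binEntropy_div_log_two, Real.binEntropy_one_sub]

lemma continuous_binEnt : Continuous binEnt := by
  simp only [funext binEnt_eq_binEntropy_div_log_two]
  fun_prop

lemma monotoneOn_binEnt : MonotoneOn binEnt (Set.Icc 0 2⁻¹) := by
  simp only [funext binEnt_eq_binEntropy_div_log_two]
  exact fun x hx y hy hxy ↦ div_le_div_of_nonneg_right
    (Real.binEntropy_strictMonoOn.monotoneOn hx hy hxy) (Real.log_nonneg one_le_two)

lemma hasDerivAt_binEnt_one_sub_div_two {s : ℝ} (hs : s ∈ Set.Ioo (-1) 1) :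
    HasDerivAt (fun s ↦ binEnt ((1 - s) / 2)) (-Real.artanh s / Real.log 2) s := by
  obtain ⟨hs₁, hs₂⟩ := hs
  simp only [binEnt_eq_binEntropy_div_log_two]
  have inner : HasDerivAt (fun s : ℝ ↦ (1 - s) / 2) (-1 / 2) s :=
    ((hasDerivAt_id s).const_sub 1).div_const 2
  have outer := Real.hasDerivAt_binEntropy (p := (1 - s) / 2) (by linarith) (by linarith)
  have log_sub_log : Real.log (1 - (1 - s) / 2) - Real.log ((1 - s) / 2) = 2 * Real.artanh s := by
    rw [Real.artanh_eq_half_log ⟨hs₁.le, hs₂.le⟩, ← Real.log_div (by linarith) (by linarith),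
      show 1 - (1 - s) / 2 = (1 + s) / 2 by ring, div_div_div_cancel_right₀ two_ne_zero]
    ring
  refine ((outer.comp s inner).div_const (Real.log 2)).congr_deriv ?_
  rw [log_sub_log]
  ring

/-! ### Entanglement as a function of concurrence -/

/-- Wootters' function `𝓔`: the entropy of entanglement of a two-qubit pure state, as a function
of its concurrence `c ∈ [0, 1]`. -/
noncomputable def entOfConcurrence (c : ℝ) : ℝ :=
  binEnt ((1 - √(1 - c ^ 2)) / 2)

lemma sqrt_one_sub_sq_mem_Ioo {c : ℝ} (hc : c ∈ Set.Ioo 0 1) : √(1 - c ^ 2) ∈ Set.Ioo 0 1 := by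
  obtain ⟨hc₀, hc₁⟩ := hc
  exact ⟨Real.sqrt_pos.2 (by nlinarith), (Real.sqrt_lt' one_pos).2 (by nlinarith)⟩

lemma antitoneOn_sqrt_one_sub_sq : AntitoneOn (fun c : ℝ ↦ √(1 - c ^ 2)) (Set.Ici 0) :=
  fun _ hc _ _ hcd ↦ Real.sqrt_le_sqrt (sub_le_sub_left (pow_le_pow_left₀ hc hcd 2) 1)

lemma hasDerivAt_entOfConcurrence {c : ℝ} (hc : c ∈ Set.Ioo 0 1) :
    HasDerivAt entOfConcurrence
      (Real.artanh √(1 - c ^ 2) / Real.sinh (Real.artanh √(1 - c ^ 2)) / Real.log 2) c := by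
  have hs := sqrt_one_sub_sq_mem_Ioo hc
  have hs' : √(1 - c ^ 2) ∈ Set.Ioo (-1) 1 := ⟨by linarith [hs.1], hs.2⟩
  have inner : HasDerivAt (fun c : ℝ ↦ √(1 - c ^ 2)) (-(2 * c) / (2 * √(1 - c ^ 2))) c := by
    refine HasDerivAt.sqrt ?_ (Real.sqrt_pos.1 hs.1).ne'
    simpa using (hasDerivAt_pow 2 c).const_sub 1
  have sinh_eq : Real.sinh (Real.artanh √(1 - c ^ 2)) = √(1 - c ^ 2) / c := by
    rw [Real.sinh_artanh hs', Real.sq_sqrt (Real.sqrt_pos.1 hs.1).le, sub_sub_cancel,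
      Real.sqrt_sq hc.1.le]
  refine ((hasDerivAt_binEnt_one_sub_div_two hs').comp c inner).congr_deriv ?_
  rw [sinh_eq]
  field_simp

lemma convexOn_entOfConcurrence : ConvexOn ℝ (Set.Icc 0 1) entOfConcurrence := by
  refine MonotoneOn.convexOn_of_deriv (convex_Icc 0 1) ?_ ?_ ?_
  · exact (continuous_binEnt.comp (by fun_prop)).continuousOn
  · rw [interior_Icc]
    exact fun c hc ↦ (hasDerivAt_entOfConcurrence hc).differentiableAt.differentiableWithinAt
  · rw [interior_Icc]
    intro c hc d hd hcd
    have hsc := sqrt_one_sub_sq_mem_Ioo hc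
    have hsd := sqrt_one_sub_sq_mem_Ioo hd
    have artanh_le : Real.artanh √(1 - d ^ 2) ≤ Real.artanh √(1 - c ^ 2) :=
      Real.artanh_le_artanh (by linarith [hsd.1]) hsc.2
        (antitoneOn_sqrt_one_sub_sq hc.1.le hd.1.le hcd)
    rw [(hasDerivAt_entOfConcurrence hc).deriv, (hasDerivAt_entOfConcurrence hd).deriv]
    exact div_le_div_of_nonneg_right
      (antitoneOn_div_sinh (Real.artanh_pos hsd) (Real.artanh_pos hsc) artanh_le)
      (Real.log_nonneg one_le_two)

lemma monotoneOn_entOfConcurrence : MonotoneOn entOfConcurrence (Set.Icc 0 1) := by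
  have smaller_eigenvalue_mem (c : ℝ) : (1 - √(1 - c ^ 2)) / 2 ∈ Set.Icc 0 2⁻¹ := by
    have : √(1 - c ^ 2) ≤ 1 := Real.sqrt_le_one.2 (by nlinarith)
    constructor <;> linarith [Real.sqrt_nonneg (1 - c ^ 2)]
  intro c hc d hd hcd
  refine monotoneOn_binEnt (smaller_eigenvalue_mem c) (smaller_eigenvalue_mem d) ?_
  linarith [antitoneOn_sqrt_one_sub_sq hc.1 hd.1 hcd]

lemma entOfConcurrence_abs_sq_sub_sq {a b : ℝ} (hab : a ^ 2 + b ^ 2 = 1) :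
    entOfConcurrence |a ^ 2 - b ^ 2| = binEnt (1 / 2 - a * b) := by
  have : 1 - |a ^ 2 - b ^ 2| ^ 2 = (2 * (a * b)) ^ 2 := by
    rw [sq_abs, ← one_pow 2, ← hab]
    ring
  rw [entOfConcurrence, this, Real.sqrt_sq_eq_abs]
  rcases abs_choice (2 * (a * b)) with h | h <;> rw [h]
  · congr 1
    ring
  · rw [← binEnt_one_sub]
    congr 1
    ring

/-- The concurrence `2 |v₀₀ v₁₁ - v₀₁ v₁₀|` of a two-qubit vector, written as a determinant of its
coefficient matrix. -/
noncomputable def concurrence (v : Fin 2 × Fin 2 → ℂ) : ℝ :=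
  2 * ‖(Matrix.of v.curry).det‖

lemma concurrence_eq (v : Fin 2 × Fin 2 → ℂ) :
    concurrence v = 2 * ‖v (0, 0) * v (1, 1) - v (0, 1) * v (1, 0)‖ := by
  rw [concurrence, Matrix.det_fin_two]
  rfl

lemma concurrence_mem_Icc {v : Fin 2 × Fin 2 → ℂ} (hv : ∑ x, ‖v x‖ ^ 2 = 1) :
    concurrence v ∈ Set.Icc 0 1 := by
  refine ⟨by unfold concurrence; positivity, ?_⟩
  simp only [Fintype.sum_prod_type, Fin.sum_univ_two] at hv
  calc concurrence v
      ≤ 2 * (‖v (0, 0)‖ * ‖v (1, 1)‖ + ‖v (0, 1)‖ * ‖v (1, 0)‖) := by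
        rw [concurrence_eq, ← norm_mul, ← norm_mul]
        gcongr
        exact norm_sub_le _ _
    _ ≤ 1 := by
        linarith [two_mul_le_add_sq ‖v (0, 0)‖ ‖v (1, 1)‖, two_mul_le_add_sq ‖v (0, 1)‖ ‖v (1, 0)‖]

lemma vnEntropy_fin_two {M : Matrix (Fin 2) (Fin 2) ℂ} (hM : M.IsHermitian) (htr : M.trace = 1) :
    vnEntropy M = binEnt ((1 - √(1 - 4 * M.det.re)) / 2) := by
  have sum_eigenvalues : hM.eigenvalues 0 + hM.eigenvalues 1 = 1 := by
    have := hM.trace_eq_sum_eigenvalues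
    rw [htr, Fin.sum_univ_two] at this
    apply Complex.ofReal_injective
    simpa using this.symm
  have prod_eigenvalues : M.det.re = hM.eigenvalues 0 * hM.eigenvalues 1 := by
    rw [hM.det_eq_prod_eigenvalues, Fin.prod_univ_two]
    norm_cast
  have discriminant : 1 - 4 * M.det.re = (hM.eigenvalues 0 - hM.eigenvalues 1) ^ 2 := by
    rw [prod_eigenvalues, ← one_pow 2, ← sum_eigenvalues]
    ring
  have entropy : vnEntropy M = binEnt (hM.eigenvalues 0) := by
    rw [vnEntropy, dif_pos hM, Fin.sum_univ_two, binEnt, ← eq_sub_of_add_eq' sum_eigenvalues]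
    ring
  rw [discriminant, Real.sqrt_sq_eq_abs, entropy]
  rcases abs_choice (hM.eigenvalues 0 - hM.eigenvalues 1) with h | h <;> rw [h]
  · rw [← binEnt_one_sub]
    congr 1
    linarith
  · congr 1
    linarith

lemma entE_eq_vnEntropy_mul_conjTranspose {A B : Type*} [Fintype A] [DecidableEq A] [Fintype B]
    (v : A × B → ℂ) :
    entE v = vnEntropy (Matrix.of v.curry * (Matrix.of v.curry).conjTranspose) :=
  rfl

lemma entE_eq_entOfConcurrence {v : Fin 2 × Fin 2 → ℂ} (hv : ∑ x, ‖v x‖ ^ 2 = 1) :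
    entE v = entOfConcurrence (concurrence v) := by
  let V : Matrix (Fin 2) (Fin 2) ℂ := Matrix.of v.curry
  have trace_eq : (V * V.conjTranspose).trace = 1 := by
    have : ((∑ x, ‖v x‖ ^ 2 : ℝ) : ℂ) = 1 := by rw [hv, Complex.ofReal_one]
    rw [← this, Fintype.sum_prod_type]
    simp [Matrix.trace, Matrix.mul_apply, V, Complex.mul_conj']
  have det_eq : (V * V.conjTranspose).det = ((‖V.det‖ ^ 2 : ℝ) : ℂ) := by
    rw [Matrix.det_mul, Matrix.det_conjTranspose, ← starRingEnd_apply, Complex.mul_conj',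
      Complex.ofReal_pow]
  rw [entE_eq_vnEntropy_mul_conjTranspose,
    vnEntropy_fin_two (Matrix.isHermitian_mul_conjTranspose_self V) trace_eq, det_eq,
    Complex.ofReal_re, entOfConcurrence, concurrence, mul_pow, show (2 : ℝ) ^ 2 = 4 by norm_num]

/-! ### Pure-state decompositions -/

/-- The decompositions `ρ = ∑ i, p i • v i (v i)†` into weighted unit vectors over which `EoF`
takes its infimum, with an arbitrary finite index type. -/
structure IsPureDecomposition_s15 {ι n : Type*} [Fintype ι] [Fintype n] (ρ : Matrix n n ℂ)
    (p : ι → ℝ) (v : ι → n → ℂ) : Prop where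
  weight_pos : ∀ i, 0 < p i
  sum_weight : ∑ i, p i = 1
  sum_norm_sq : ∀ i, ∑ x, ‖v i x‖ ^ 2 = 1
  eq_sum : ρ = ∑ i, (p i : ℂ) • Matrix.of (fun x y ↦ v i x * conj (v i y))

namespace IsPureDecomposition_s15

lemma EoF_eq {A B : Type*} [Fintype A] [DecidableEq A] [Fintype B]
    {ρ : Matrix (A × B) (A × B) ℂ} {m : ℕ} {p : Fin m → ℝ} {v : Fin m → A × B → ℂ}
    (h : IsPureDecomposition_s15 ρ p v)
    (hmin : ∀ (k : ℕ) (q : Fin k → ℝ) (w : Fin k → A × B → ℂ), IsPureDecomposition_s15 ρ q w →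
      ∑ i, p i * entE (v i) ≤ ∑ i, q i * entE (w i)) :
    EoF ρ = ∑ i, p i * entE (v i) := by
  refine IsLeast.csInf_eq
    ⟨⟨m, p, v, h.weight_pos, h.sum_weight, h.sum_norm_sq, h.eq_sum, rfl⟩, ?_⟩
  rintro _ ⟨k, q, w, hq, hq_sum, hw, hρ, rfl⟩
  exact hmin k q w ⟨hq, hq_sum, hw, hρ⟩

section

variable {ι n : Type*} [Fintype ι] [Fintype n] {ρ : Matrix n n ℂ} {p : ι → ℝ} {v : ι → n → ℂ}

lemma apply_eq_sum (h : IsPureDecomposition_s15 ρ p v) (x y : n) :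
    ρ x y = ∑ i, (p i : ℂ) * (v i x * conj (v i y)) := by
  simp [h.eq_sum, Matrix.sum_apply]

lemma norm_apply_le (h : IsPureDecomposition_s15 ρ p v) (x y : n) :
    ‖ρ x y‖ ≤ ∑ i, p i * (‖v i x‖ * ‖v i y‖) := by
  rw [h.apply_eq_sum]
  refine (norm_sum_le _ _).trans_eq (Finset.sum_congr rfl fun i _ ↦ ?_)
  rw [norm_mul, norm_mul, RCLike.norm_conj, Complex.norm_of_nonneg (h.weight_pos i).le]

lemma apply_eq_zero_of_diag_eq_zero (h : IsPureDecomposition_s15 ρ p v) {x : n} (hx : ρ x x = 0)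
    (i : ι) : v i x = 0 := by
  have sum_eq_zero : ∑ j, p j * ‖v j x‖ ^ 2 = 0 := by
    have : ((∑ j, p j * ‖v j x‖ ^ 2 : ℝ) : ℂ) = ρ x x := by
      simp [h.apply_eq_sum, Complex.mul_conj']
    exact_mod_cast this.trans hx
  have nonneg (j : ι) : 0 ≤ p j * ‖v j x‖ ^ 2 := mul_nonneg (h.weight_pos j).le (sq_nonneg _)
  have := (Fintype.sum_eq_zero_iff_of_nonneg nonneg).1 sum_eq_zero
  simpa [(h.weight_pos i).ne'] using congrFun this i

end

section

variable {ι : Type*} [Fintype ι] {ρ : Matrix (Fin 2 × Fin 2) (Fin 2 × Fin 2) ℂ} {p : ι → ℝ}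
  {v : ι → Fin 2 × Fin 2 → ℂ}

lemma sum_concurrence_mem_Icc (h : IsPureDecomposition_s15 ρ p v) :
    ∑ i, p i * concurrence (v i) ∈ Set.Icc 0 1 :=
  (convex_Icc 0 1).sum_mem (fun i _ ↦ (h.weight_pos i).le) h.sum_weight
    fun i _ ↦ concurrence_mem_Icc (h.sum_norm_sq i)

lemma entOfConcurrence_sum_le_sum_entE (h : IsPureDecomposition_s15 ρ p v) :
    entOfConcurrence (∑ i, p i * concurrence (v i)) ≤ ∑ i, p i * entE (v i) := by
  simp only [fun i ↦ entE_eq_entOfConcurrence (h.sum_norm_sq i)]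
  exact convexOn_entOfConcurrence.map_sum_le (fun i _ ↦ (h.weight_pos i).le) h.sum_weight
    fun i _ ↦ concurrence_mem_Icc (h.sum_norm_sq i)

lemma two_mul_norm_le_sum_concurrence (h : IsPureDecomposition_s15 ρ p v)
    (hρ : ρ (0, 1) (0, 1) = 0) :
    2 * ‖ρ (0, 0) (1, 1)‖ ≤ ∑ i, p i * concurrence (v i) := by
  calc 2 * ‖ρ (0, 0) (1, 1)‖
      ≤ 2 * ∑ i, p i * (‖v i (0, 0)‖ * ‖v i (1, 1)‖) := by
        gcongr
        exact h.norm_apply_le _ _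
    _ = ∑ i, p i * concurrence (v i) := by
        rw [Finset.mul_sum]
        refine Finset.sum_congr rfl fun i _ ↦ ?_
        rw [concurrence_eq, h.apply_eq_zero_of_diag_eq_zero hρ, zero_mul, sub_zero, norm_mul]
        ring

lemma entOfConcurrence_le_sum_entE (h : IsPureDecomposition_s15 ρ p v) (hρ : ρ (0, 1) (0, 1) = 0) :
    entOfConcurrence (2 * ‖ρ (0, 0) (1, 1)‖) ≤ ∑ i, p i * entE (v i) := by
  have hle := h.two_mul_norm_le_sum_concurrence hρ
  have hmem := h.sum_concurrence_mem_Icc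
  exact (monotoneOn_entOfConcurrence ⟨by positivity, hle.trans hmem.2⟩ hmem hle).trans
    h.entOfConcurrence_sum_le_sum_entE

end

end IsPureDecomposition_s15

/-! ### Bell states -/

/-- The mixture `α²·Φ⁺(Φ⁺)† + β²·Φ⁻(Φ⁻)†` of the two Bell states. -/
noncomputable def bellMixture (α β : ℝ) : Matrix (Fin 2 × Fin 2) (Fin 2 × Fin 2) ℂ :=
  (α ^ 2 : ℂ) • Matrix.of (fun x y ↦ PhiPlus x * conj (PhiPlus y))
    + (β ^ 2 : ℂ) • Matrix.of (fun x y ↦ PhiMinus x * conj (PhiMinus y))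

/-- The superposition `α Φ⁺ + β Φ⁻`; the two choices of sign of `β` form the optimal decomposition
of `bellMixture α β`. -/
noncomputable def bellSuperposition (α β : ℝ) : Fin 2 × Fin 2 → ℂ :=
  fun x ↦ α * PhiPlus x + β * PhiMinus x

lemma bellMixture_apply (α β : ℝ) (x y : Fin 2 × Fin 2) :
    bellMixture α β x y
      = (α ^ 2 : ℂ) * (PhiPlus x * conj (PhiPlus y))
        + (β ^ 2 : ℂ) * (PhiMinus x * conj (PhiMinus y)) :=
  rfl

lemma bellMixture_zero_one (α β : ℝ) : bellMixture α β (0, 1) (0, 1) = 0 := by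
  simp [bellMixture_apply, PhiPlus, PhiMinus]

lemma two_mul_norm_bellMixture (α β : ℝ) :
    2 * ‖bellMixture α β (0, 0) (1, 1)‖ = |α ^ 2 - β ^ 2| := by
  have : bellMixture α β (0, 0) (1, 1) = (((α ^ 2 - β ^ 2) / 2 : ℝ) : ℂ) := by
    have inv_sqrt_two_sq : (√2 : ℂ)⁻¹ ^ 2 = 1 / 2 := by
      rw [inv_pow, ← Complex.ofReal_pow, Real.sq_sqrt zero_le_two]
      norm_num
    simp only [bellMixture_apply, PhiPlus, PhiMinus, if_true, if_false, Prod.mk.injEq, one_ne_zero,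
      and_self, map_neg, Complex.conj_ofReal, one_div]
    push_cast
    linear_combination ((α : ℂ) ^ 2 - (β : ℂ) ^ 2) * inv_sqrt_two_sq
  rw [this, Complex.norm_real, Real.norm_eq_abs, abs_div, abs_two, mul_div_cancel₀ _ two_ne_zero]

lemma bellSuperposition_zero_zero (α β : ℝ) :
    bellSuperposition α β (0, 0) = (((α + β) / √2 : ℝ) : ℂ) := by
  simp only [bellSuperposition, PhiPlus, PhiMinus, if_true]
  push_cast
  ring

lemma bellSuperposition_one_one (α β : ℝ) :
    bellSuperposition α β (1, 1) = (((α - β) / √2 : ℝ) : ℂ) := by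
  simp only [bellSuperposition, PhiPlus, PhiMinus, if_true, if_false, Prod.mk.injEq, one_ne_zero,
    and_self]
  push_cast
  ring

lemma bellSuperposition_zero_one (α β : ℝ) : bellSuperposition α β (0, 1) = 0 := by
  simp [bellSuperposition, PhiPlus, PhiMinus]

lemma bellSuperposition_one_zero (α β : ℝ) : bellSuperposition α β (1, 0) = 0 := by
  simp [bellSuperposition, PhiPlus, PhiMinus]

lemma sum_norm_sq_bellSuperposition (α β : ℝ) :
    ∑ x, ‖bellSuperposition α β x‖ ^ 2 = α ^ 2 + β ^ 2 := by
  simp only [Fintype.sum_prod_type, Fin.sum_univ_two, bellSuperposition_zero_zero,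
    bellSuperposition_zero_one, bellSuperposition_one_zero, bellSuperposition_one_one,
    Complex.norm_real, Real.norm_eq_abs, sq_abs, norm_zero, div_pow, Real.sq_sqrt zero_le_two]
  ring

lemma concurrence_bellSuperposition (α β : ℝ) :
    concurrence (bellSuperposition α β) = |α ^ 2 - β ^ 2| := by
  rw [concurrence_eq, bellSuperposition_zero_one, zero_mul, sub_zero, bellSuperposition_zero_zero,
    bellSuperposition_one_one, ← Complex.ofReal_mul, Complex.norm_real, Real.norm_eq_abs,
    div_mul_div_comm, Real.mul_self_sqrt zero_le_two, abs_div, abs_two,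
    mul_div_cancel₀ _ two_ne_zero]
  congr 1
  ring

lemma isPureDecomposition_bellMixture {α β : ℝ} (hab : α ^ 2 + β ^ 2 = 1) :
    IsPureDecomposition_s15 (bellMixture α β) (fun _ ↦ 1 / 2)
      ![bellSuperposition α β, bellSuperposition α (-β)] where
  weight_pos _ := by norm_num
  sum_weight := by norm_num
  sum_norm_sq := by
    simp [Fin.forall_fin_two, sum_norm_sq_bellSuperposition, hab]
  eq_sum := by
    ext x y
    simp only [bellMixture_apply, bellSuperposition, Matrix.sum_apply, Matrix.smul_apply,
      Matrix.of_apply, smul_eq_mul, Fin.sum_univ_two, Matrix.cons_val_zero, Matrix.cons_val_one,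
      map_add, map_mul, Complex.conj_ofReal]
    push_cast
    ring

lemma entE_bellSuperposition {α β : ℝ} (hab : α ^ 2 + β ^ 2 = 1) :
    entE (bellSuperposition α β) = entOfConcurrence |α ^ 2 - β ^ 2| := by
  rw [entE_eq_entOfConcurrence ((sum_norm_sq_bellSuperposition α β).trans hab),
    concurrence_bellSuperposition]

theorem eof_bell_mixture_general (α β : ℝ) (hab : α ^ 2 + β ^ 2 = 1) :
    EoF (bellMixture α β) = binEnt (1 / 2 - α * β) := by
  have average : ∑ i, 1 / 2 * entE (![bellSuperposition α β, bellSuperposition α (-β)] i)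
      = entOfConcurrence |α ^ 2 - β ^ 2| := by
    simp only [Fin.sum_univ_two, Matrix.cons_val_zero, Matrix.cons_val_one]
    rw [entE_bellSuperposition hab, entE_bellSuperposition (by rwa [neg_sq]), neg_sq]
    ring
  rw [(isPureDecomposition_bellMixture hab).EoF_eq, average, entOfConcurrence_abs_sq_sub_sq hab]
  intro k q w hw
  rw [average, ← two_mul_norm_bellMixture]
  exact hw.entOfConcurrence_le_sum_entE (bellMixture_zero_one α β)

/-- the entanglement of formation of the mixture
`ρ = α²·Φ⁺(Φ⁺)† + β²·Φ⁻(Φ⁻)†` equals `H₂(1/2 − αβ)`. -/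
theorem eof_bell_mixture (α β : ℝ) (hα : 0 ≤ α) (hβ : 0 ≤ β)
    (hab : α ^ 2 + β ^ 2 = 1) :
    EoF ((α ^ 2 : ℂ) • Matrix.of (fun x y => PhiPlus x * conj (PhiPlus y))
       + (β ^ 2 : ℂ) • Matrix.of (fun x y => PhiMinus x * conj (PhiMinus y)))
      = binEnt (1/2 - α * β) :=
  eof_bell_mixture_general α β hab
end
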